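/- Let R be a Noetherian ring, S := R[X_1,…,X_n] a graded polynomial ring over R with deg X_i > 0 (and R in degree 0), N a finitely generated R-module, and M a finitely generated graded S-module. Set d := max{ i : H^i_{S_+}(M ⊗_R N) ≠ 0 }. Then the natural graded map H^d_{S_+}(M) ⊗_R N → H^d_{S_+}(M ⊗_R N) is an isomorphism, and for every i > d and every q one has Tor_q^R( H^i_{S_+}(M), N ) = 0 and H^i_{S_+}( Tor_q^R(M, N) ) = 0. -/

import Mathlib

noncomputable section CechCore

variable (A : Type) [CommRing A] {n : ℕ} (x : Fin n → A)
  (M : Type) [AddCommGroup M] [Module A M]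

/-- The localization of `M` at the powers of `∏ i ∈ S, x i`. -/
abbrev cechL (S : Finset (Fin n)) : Type :=
  LocalizedModule (Submonoid.powers (∏ i ∈ S, x i)) M

/-- The `p`-th term of the (stable Koszul/Čech) complex of `M` with respect to `x`. -/
abbrev cechC (p : ℕ) : Type := ∀ S : {S : Finset (Fin n) // S.card = p}, cechL A x M S.1

/-- The localization map between Čech localizations, for `S ⊆ T`. -/
def cechMap (S T : Finset (Fin n)) (h : S ⊆ T) : cechL A x M S →ₗ[A] cechL A x M T :=
  LocalizedModule.lift _ (LocalizedModule.mkLinearMap (Submonoid.powers (∏ i ∈ T, x i)) M)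
    (by
      rintro ⟨s, k, rfl⟩
      simp only [map_pow]
      refine IsUnit.pow k ?_
      have hu : IsUnit ((algebraMap A (Module.End A (cechL A x M T))) (∏ i ∈ T, x i)) :=
        IsLocalizedModule.map_units (LocalizedModule.mkLinearMap _ M)
          ⟨∏ i ∈ T, x i, Submonoid.mem_powers _⟩
      have h2 : (∏ i ∈ T, x i) = (∏ i ∈ T \ S, x i) * ∏ i ∈ S, x i :=
        (Finset.prod_sdiff h).symm
      have hu' : IsUnit ((algebraMap A (Module.End A (cechL A x M T)))
          ((∏ i ∈ T \ S, x i) * ∏ i ∈ S, x i)) := by rw [← h2]; exact hu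
      rw [map_mul] at hu'
      exact (((Commute.all ((∏ i ∈ T \ S, x i)) (∏ i ∈ S, x i)).map
        (algebraMap A (Module.End A (cechL A x M T))).toMonoidHom).isUnit_mul_iff.mp hu').2)

/-- The Čech differential. -/
def cechD (p : ℕ) : cechC A x M p →ₗ[A] cechC A x M (p + 1) :=
  LinearMap.pi fun T =>
    ∑ j ∈ T.1.attach,
      ((-1 : A) ^ (T.1.filter (fun a => a < j.1)).card) •
        ((cechMap A x M (T.1.erase j.1) T.1 (Finset.erase_subset _ _)).comp
          (LinearMap.proj (⟨T.1.erase j.1, by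
            simp [Finset.card_erase_of_mem j.2, T.2]⟩ : {S : Finset (Fin n) // S.card = p})))

/-- `c` is a coboundary in the Čech complex. -/
def cechIsBoundary : (p : ℕ) → cechC A x M p → Prop
  | 0, c => c = 0
  | (q + 1), c => ∃ b : cechC A x M q, cechD A x M q b = c

/-- The degree-`μ` graded piece of a Čech localization, for a grading `ℳ` of `M`
over a grading of `A` in which `x i` has degree `w i`. -/
def cechGrade (ℳ : ℤ → AddSubgroup M) (w : Fin n → ℤ) (μ : ℤ) (S : Finset (Fin n)) :
    AddSubgroup (cechL A x M S) :=
  AddSubgroup.closure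
    {c | ∃ (m : M) (k : ℕ), m ∈ ℳ (μ + k * (∑ i ∈ S, w i)) ∧
      c = LocalizedModule.mk m ⟨(∏ i ∈ S, x i) ^ k, Submonoid.pow_mem _ (Submonoid.mem_powers _) k⟩}

/-- `H^i_{(x)}(M)_μ ≠ 0`: there is a homogeneous degree-`μ` cocycle in the Čech complex
which is not a coboundary.  This is the nonvanishing of the degree-`μ` part of the `i`-th
local cohomology of the graded module `M` supported on the ideal generated by `x`. -/
def lcGradeNonzero (ℳ : ℤ → AddSubgroup M) (w : Fin n → ℤ) (i : ℕ) (μ : ℤ) : Prop :=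
  ∃ c : cechC A x M i, (∀ T, c T ∈ cechGrade A x M ℳ w μ T.1) ∧
    cechD A x M i c = 0 ∧ ¬ cechIsBoundary A x M i c

/-- `H^i_{(x)}(M) = 0` : every Čech cocycle is a coboundary. -/
def lcVanish (i : ℕ) : Prop :=
  ∀ c : cechC A x M i, cechD A x M i c = 0 → cechIsBoundary A x M i c

/-- The map from the previous term of the Čech complex (declared as the zero map in
homological degree `0`). -/
def cechDprev : (i : ℕ) → (cechC A x M (i - 1) →ₗ[A] cechC A x M i)
  | 0 => 0
  | (q + 1) => cechD A x M q

/-- The `i`-th local cohomology module of `M` supported on the ideal generated by `x`,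
defined as cocycles modulo (cocycles ∩ boundaries) of the Čech complex. -/
def lcMod (i : ℕ) : Type :=
  ↥(LinearMap.ker (cechD A x M i)) ⧸
    (Submodule.comap (LinearMap.ker (cechD A x M i)).subtype
      (LinearMap.range (cechDprev A x M i)))

instance (i : ℕ) : AddCommGroup (lcMod A x M i) := by unfold lcMod; infer_instance
instance (i : ℕ) : Module A (lcMod A x M i) := by unfold lcMod; infer_instance

/-- The ideal of elements of positive degree of a graded ring. -/
def irrelevantIdeal (𝒜 : ℤ → AddSubgroup A) : Ideal A :=
  Ideal.span {a : A | ∃ μ > 0, a ∈ 𝒜 μ}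

end CechCore

noncomputable section TmulCore

variable (R : Type) [CommRing R] (S : Type) [CommRing S] [Algebra R S]
variable (M : Type) [AddCommGroup M] [Module R M] [Module S M] [IsScalarTower R S M]
variable (N : Type) [AddCommGroup N] [Module R N]

/-- The `S`-linear map `m ↦ m ⊗ n`. -/
def tmulRightS (nn : N) : M →ₗ[S] TensorProduct R M N where
  toFun := fun m => m ⊗ₜ[R] nn
  map_add' := fun a b => TensorProduct.add_tmul a b nn
  map_smul' := fun s m => by simp [TensorProduct.smul_tmul']

/-- The canonical map `(M_f) ⊗_R N → (M ⊗_R N)_f` at the level of Čech localizations,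
sending `m/f^k ⊗ n` to `(m ⊗ n)/f^k`. -/
def cechTmul {n : ℕ} (x : Fin n → S) (T : Finset (Fin n))
    (c : cechL S x M T) (nn : N) : cechL S x (TensorProduct R M N) T :=
  LocalizedModule.lift _
    ((LocalizedModule.mkLinearMap (Submonoid.powers (∏ i ∈ T, x i))
        (TensorProduct R M N)).comp (tmulRightS R S M N nn))
    (fun s => IsLocalizedModule.map_units
      (LocalizedModule.mkLinearMap (Submonoid.powers (∏ i ∈ T, x i)) (TensorProduct R M N)) s) c

end TmulCore

noncomputable section TorCore

variable (R : Type) [CommRing R] (S : Type) [CommRing S] [Algebra R S]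
variable (M : Type) [AddCommGroup M] [Module R M] [Module S M] [IsScalarTower R S M]
variable (F : ℕ → Type) [∀ q, AddCommGroup (F q)] [∀ q, Module R (F q)]
variable (dF : ∀ q : ℕ, F (q + 1) →ₗ[R] F q)

/-- The differential `M ⊗ F_{q+1} → M ⊗ F_q` of the complex `M ⊗_R F_•`, as a map of
`S`-modules (through the `S`-module structure of `M`). -/
def torD (q : ℕ) : TensorProduct R M (F (q + 1)) →ₗ[S] TensorProduct R M (F q) :=
  TensorProduct.AlgebraTensorModule.map (LinearMap.id : M →ₗ[S] M) (dF q)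

/-- The outgoing differential `M ⊗ F_q → M ⊗ F_{q-1}` (the zero map for `q = 0`). -/
def torDout : (q : ℕ) → (TensorProduct R M (F q) →ₗ[S] TensorProduct R M (F (q - 1)))
  | 0 => 0
  | (q + 1) => torD R S M F dF q

/-- `Tor_q^R(M, N)` computed from a given free resolution `F_• → N` of `N`, as an
`S`-module: the homology `ker(M ⊗ F_q → M ⊗ F_{q-1}) / im(M ⊗ F_{q+1} → M ⊗ F_q)`. -/
def torMod (q : ℕ) : Type :=
  ↥(LinearMap.ker (torDout R S M F dF q)) ⧸
    (Submodule.comap (LinearMap.ker (torDout R S M F dF q)).subtype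
      (LinearMap.range (torD R S M F dF q)))

instance (q : ℕ) : AddCommGroup (torMod R S M F dF q) := by unfold torMod; infer_instance
instance (q : ℕ) : Module S (torMod R S M F dF q) := by unfold torMod; infer_instance

end TorCore

/-- `Tor_q^R(P, N)` for an `S`-module `P` (with `R`-action through `R → S`), computed
from the resolution `F_•` of `N`. -/
noncomputable def torModS (R : Type) [CommRing R] (S : Type) [CommRing S] [Algebra R S]
    (P : Type) [AddCommGroup P] [Module S P]
    (F : ℕ → Type) [∀ q, AddCommGroup (F q)] [∀ q, Module R (F q)]
    (dF : ∀ q : ℕ, F (q + 1) →ₗ[R] F q) (q : ℕ) : Type :=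
  letI : Module R P := Module.compHom P (algebraMap R S)
  letI : IsScalarTower R S P := ⟨fun r s m => by rw [Algebra.smul_def, mul_smul]; rfl⟩
  torMod R S P F dF q

/-! Multiplication by `a ∈ Ann N` is null-homotopic on a resolution of `N`, so the failure of
`H^i(-)` to commute with `- ⊗ N` is measured by modules which `Ann N` would have to kill; they
vanish as soon as every element of them is killed by some `1 + a` with `a ∈ Ann N`. Two
arguments produce such elements in degrees `i > d`.

* A finitely generated module killed by `Ann M` and `Ann N` is supported on the support of
  `M ⊗ N`. As the top nonvanishing degree of local cohomology depends only on the support, the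
  `i`-th local cohomology of such a module vanishes.
* Let `L` be graded, finitely generated and killed by `Ann M`, and let `Ann N` be generated by
  `a_1, …, a_r`. By the first point and descending induction on `i`, the map
  `(a_1, …, a_r) : L^r → L` is surjective on `H^i` up to factors in `1 + Ann N`. The graded pieces
  of `H^i(L)` are finitely generated over `R`, so Nakayama's lemma shows that every element of
  `H^i(L)` is killed by some `1 + a`. -/

noncomputable section

open Function

section CechLocalization

variable {A : Type} [CommRing A] {n : ℕ} (x : Fin n → A)
variable {L L' L'' : Type} [AddCommGroup L] [Module A L] [AddCommGroup L'] [Module A L']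
  [AddCommGroup L''] [Module A L'']

namespace cechL

/-- The fraction `m / (∏ i ∈ T, x i) ^ k` in the localization attached to `T`, as a linear
function of its numerator `m`. -/
def frac (T : Finset (Fin n)) (k : ℕ) : L →ₗ[A] cechL A x L T :=
  LocalizedModule.divBy
      (⟨(∏ i ∈ T, x i) ^ k, k, rfl⟩ : Submonoid.powers (∏ i ∈ T, x i)) ∘ₗ
    LocalizedModule.mkLinearMap _ L

lemma frac_eq_mk (T : Finset (Fin n)) (k : ℕ) (m : L) :
    frac x T k m = LocalizedModule.mk m
      ⟨(∏ i ∈ T, x i) ^ k, Submonoid.pow_mem _ (Submonoid.mem_powers _) k⟩ := by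
  simp only [frac, LinearMap.comp_apply, LocalizedModule.mkLinearMap_apply,
    LocalizedModule.divBy_apply, LocalizedModule.liftOn_mk, one_mul]

lemma exists_eq_frac (T : Finset (Fin n)) (c : cechL A x L T) : ∃ k m, c = frac x T k m := by
  induction c using LocalizedModule.induction_on with
  | h m s =>
    obtain ⟨_, k, rfl⟩ := s
    exact ⟨k, m, (frac_eq_mk x T k m).symm⟩

lemma frac_add_right (T : Finset (Fin n)) (k l : ℕ) (m : L) :
    frac x T (k + l) ((∏ i ∈ T, x i) ^ l • m) = frac x T k m := by
  rw [frac_eq_mk, frac_eq_mk, LocalizedModule.mk_eq]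
  refine ⟨1, ?_⟩
  simp only [Submonoid.mk_smul, one_smul, smul_smul, pow_add]

lemma pow_smul_frac (T : Finset (Fin n)) (k : ℕ) (m : L) :
    (∏ i ∈ T, x i) ^ k • frac x T k m = frac x T 0 m := by
  simpa using frac_add_right x T 0 k m

lemma frac_eq_zero_iff (T : Finset (Fin n)) (k : ℕ) (m : L) :
    frac x T k m = 0 ↔ ∃ e : ℕ, (∏ i ∈ T, x i) ^ e • m = 0 := by
  rw [frac_eq_mk, ← LocalizedModule.zero_mk 1, LocalizedModule.mk_eq]
  simp [Submonoid.smul_def, Subtype.exists, Submonoid.mem_powers_iff]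

lemma exists_eq_frac_pair (T : Finset (Fin n)) (c c' : cechL A x L T) :
    ∃ k m m', c = frac x T k m ∧ c' = frac x T k m' := by
  obtain ⟨k, m, rfl⟩ := exists_eq_frac x T c
  obtain ⟨k', m', rfl⟩ := exists_eq_frac x T c'
  exact ⟨k + k', _, _, (frac_add_right x T k k' m).symm,
    by rw [add_comm, frac_add_right]⟩

/-- The map induced by `φ : L → L'` on the localizations attached to `T`. -/
def map (φ : L →ₗ[A] L') (T : Finset (Fin n)) : cechL A x L T →ₗ[A] cechL A x L' T :=
  IsLocalizedModule.map (Submonoid.powers (∏ i ∈ T, x i))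
    (LocalizedModule.mkLinearMap _ L) (LocalizedModule.mkLinearMap _ L') φ

@[simp] lemma map_frac (φ : L →ₗ[A] L') (T : Finset (Fin n)) (k : ℕ) (m : L) :
    map x φ T (frac x T k m) = frac x T k (φ m) := by
  simp only [frac_eq_mk]
  exact IsLocalizedModule.map_LocalizedModules _ φ m _

lemma map_comp_apply (φ : L →ₗ[A] L') (ψ : L' →ₗ[A] L'') (T : Finset (Fin n))
    (c : cechL A x L T) : map x (ψ ∘ₗ φ) T c = map x ψ T (map x φ T c) := by
  obtain ⟨k, m, rfl⟩ := exists_eq_frac x T c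
  simp

lemma map_id_apply (T : Finset (Fin n)) (c : cechL A x L T) : map x LinearMap.id T c = c := by
  obtain ⟨k, m, rfl⟩ := exists_eq_frac x T c
  simp

protected lemma map_add (φ ψ : L →ₗ[A] L') (T : Finset (Fin n)) :
    map x (φ + ψ) T = map x φ T + map x ψ T := by
  simp [map]

protected lemma map_smul (a : A) (φ : L →ₗ[A] L') (T : Finset (Fin n)) :
    map x (a • φ) T = a • map x φ T := by
  simp [map]

lemma map_injective {φ : L →ₗ[A] L'} (hφ : Injective φ) (T : Finset (Fin n)) :
    Injective (map x φ T) :=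
  IsLocalizedModule.map_injective _ _ _ φ hφ

lemma map_surjective {φ : L →ₗ[A] L'} (hφ : Surjective φ) (T : Finset (Fin n)) :
    Surjective (map x φ T) :=
  IsLocalizedModule.map_surjective _ _ _ φ hφ

lemma map_exact {φ : L →ₗ[A] L'} {ψ : L' →ₗ[A] L''} (h : Exact φ ψ) (T : Finset (Fin n)) :
    Exact (map x φ T) (map x ψ T) :=
  IsLocalizedModule.map_exact _ _ _ _ φ ψ h

end cechL

open cechL

@[simp] lemma cechMap_frac (S T : Finset (Fin n)) (h : S ⊆ T) (k : ℕ) (m : L) :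
    cechMap A x L S T h (frac x S k m) = frac x T k ((∏ i ∈ T \ S, x i) ^ k • m) := by
  rw [frac_eq_mk x S, cechMap, LocalizedModule.lift_mk,
    Module.End.algebraMap_isUnit_inv_apply_eq_iff, map_smul, ← mul_smul, ← mul_pow, mul_comm,
    Finset.prod_sdiff h, pow_smul_frac]
  simp only [frac_eq_mk, LocalizedModule.mkLinearMap_apply, pow_zero]
  rfl

lemma cechMap_cechMap (S T U : Finset (Fin n)) (h : S ⊆ T) (h' : T ⊆ U) (c : cechL A x L S) :
    cechMap A x L T U h' (cechMap A x L S T h c) = cechMap A x L S U (h.trans h') c := by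
  obtain ⟨k, m, rfl⟩ := exists_eq_frac x S c
  have hprod : (∏ i ∈ U \ T, x i) * ∏ i ∈ T \ S, x i = ∏ i ∈ U \ S, x i := by
    have hsub : T \ S ⊆ U \ S := Finset.sdiff_subset_sdiff h' subset_rfl
    rw [← Finset.prod_sdiff hsub, sdiff_sdiff_sdiff_cancel_right h]
  simp only [cechMap_frac, smul_smul, ← mul_pow, hprod]

lemma cechL.map_cechMap (φ : L →ₗ[A] L') (S T : Finset (Fin n)) (h : S ⊆ T)
    (c : cechL A x L S) :
    map x φ T (cechMap A x L S T h c) = cechMap A x L' S T h (map x φ S c) := by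
  obtain ⟨k, m, rfl⟩ := exists_eq_frac x S c
  simp

end CechLocalization

section CechDifferential

variable {A : Type} [CommRing A] {n : ℕ} (x : Fin n → A)
variable {L L' L'' : Type} [AddCommGroup L] [Module A L] [AddCommGroup L'] [Module A L']
  [AddCommGroup L''] [Module A L'']

open cechL

/-- The sign with which the face `T \ {j}` of `T` enters the Čech differential. -/
def cechSign (A : Type) [CommRing A] (j : Fin n) (T : Finset (Fin n)) : A :=
  (-1) ^ (T.filter (· < j)).card

lemma cechSign_mul_self (j : Fin n) (T : Finset (Fin n)) :
    cechSign A j T * cechSign A j T = 1 := by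
  rw [cechSign, ← mul_pow, neg_one_mul, neg_neg, one_pow]

lemma cechSign_eq_ite_mul_erase {j : Fin n} (k : Fin n) {T : Finset (Fin n)} (hj : j ∈ T) :
    cechSign A k T = (if j < k then -1 else 1) * cechSign A k (T.erase j) := by
  simp only [cechSign, Finset.filter_erase]
  split_ifs with h
  · rw [← Finset.card_erase_add_one (Finset.mem_filter.2 ⟨hj, h⟩), pow_succ']
  · rw [Finset.erase_eq_of_notMem (by simp [h]), one_mul]

lemma cechSign_mul_erase {j k : Fin n} {T : Finset (Fin n)} (hj : j ∈ T) (hk : k ∈ T)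
    (hjk : j ≠ k) : cechSign A j T * cechSign A k (T.erase j) =
      -(cechSign A k T * cechSign A j (T.erase k)) := by
  rw [cechSign_eq_ite_mul_erase k hj, cechSign_eq_ite_mul_erase j hk]
  rcases lt_or_gt_of_ne hjk with h | h <;> simp only [h, h.not_gt, if_true, if_false] <;> ring

namespace cechC

/-- The restriction to `T` of the component `c_S` of a Čech cochain of degree `p`. The value is
the junk `0` unless `S` has `p` elements and `S ⊆ T`, so that sums over faces of `T` need not
carry membership proofs. -/
def face {p : ℕ} (c : cechC A x L p) (S T : Finset (Fin n)) : cechL A x L T :=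
  if h : S.card = p ∧ S ⊆ T then cechMap A x L S T h.2 (c ⟨S, h.1⟩) else 0

variable {x}

lemma face_eq {p : ℕ} (c : cechC A x L p) {S T : Finset (Fin n)} (hS : S.card = p)
    (hST : S ⊆ T) : face x c S T = cechMap A x L S T hST (c ⟨S, hS⟩) :=
  dif_pos ⟨hS, hST⟩

lemma cechMap_face {p : ℕ} (c : cechC A x L p) (S : Finset (Fin n)) {T U : Finset (Fin n)}
    (hST : S ⊆ T) (hTU : T ⊆ U) : cechMap A x L T U hTU (face x c S T) = face x c S U := by
  by_cases hS : S.card = p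
  · rw [face_eq c hS hST, face_eq c hS (hST.trans hTU), cechMap_cechMap]
  · simp [face, hS]

end cechC

open cechC

variable {x}

lemma cechD_apply {p : ℕ} (c : cechC A x L p) (T : {T : Finset (Fin n) // T.card = p + 1}) :
    cechD A x L p c T = ∑ j ∈ T.1, cechSign A j T.1 • face x c (T.1.erase j) T.1 := by
  rw [cechD, LinearMap.pi_apply, LinearMap.sum_apply, ← Finset.sum_attach T.1]
  refine Finset.sum_congr rfl fun j _ => ?_
  have hcard : (T.1.erase j.1).card = p := by rw [Finset.card_erase_of_mem j.2, T.2]; rfl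
  rw [face_eq c hcard (Finset.erase_subset _ _)]
  rfl

/-- The terms of the double sum over ordered pairs `(j, k)` of distinct elements of `T` cancel
under swapping `j` and `k`. -/
lemma cechD_cechD {p : ℕ} (c : cechC A x L p) : cechD A x L (p + 1) (cechD A x L p c) = 0 := by
  funext T
  have hterm : ∀ j ∈ T.1, cechSign A j T.1 • face x (cechD A x L p c) (T.1.erase j) T.1 =
      ∑ k ∈ T.1.erase j, (cechSign A j T.1 * cechSign A k (T.1.erase j)) •
        face x c ((T.1.erase j).erase k) T.1 := fun j hj => by
    have hcard : (T.1.erase j).card = p + 1 := by rw [Finset.card_erase_of_mem hj, T.2]; rfl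
    rw [face_eq _ hcard (Finset.erase_subset _ _), cechD_apply, map_sum, Finset.smul_sum]
    refine Finset.sum_congr rfl fun k _ => ?_
    rw [map_smul, cechMap_face c _ (Finset.erase_subset _ _), mul_smul]
  rw [cechD_apply, Finset.sum_congr rfl hterm, Finset.sum_sigma']
  refine Finset.sum_involution (fun a _ => ⟨a.2, a.1⟩) ?_ ?_ ?_ fun _ _ => rfl
  · rintro ⟨j, k⟩ h
    simp only [Finset.mem_sigma, Finset.mem_erase] at h
    rw [Finset.erase_right_comm, cechSign_mul_erase h.1 h.2.2 (Ne.symm h.2.1), neg_smul,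
      neg_add_cancel]
  · rintro ⟨j, k⟩ h _ hswap
    simp only [Finset.mem_sigma, Finset.mem_erase] at h
    exact h.2.1 (congrArg Sigma.fst hswap)
  · rintro ⟨j, k⟩ h
    simp only [Finset.mem_sigma, Finset.mem_erase] at h ⊢
    exact ⟨h.2.2, Ne.symm h.2.1, h.1⟩

lemma cechD_cechDprev {p : ℕ} (c : cechC A x L (p - 1)) :
    cechD A x L p (cechDprev A x L p c) = 0 := by
  cases p with
  | zero => exact map_zero _
  | succ q => exact cechD_cechD c

namespace cechC

variable (x)

/-- The map induced by `φ : L → L'` on Čech cochains. -/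
def map (φ : L →ₗ[A] L') (p : ℕ) : cechC A x L p →ₗ[A] cechC A x L' p :=
  LinearMap.pi fun T => cechL.map x φ T.1 ∘ₗ LinearMap.proj T

@[simp] lemma map_apply (φ : L →ₗ[A] L') (p : ℕ) (c : cechC A x L p)
    (T : {T : Finset (Fin n) // T.card = p}) : map x φ p c T = cechL.map x φ T.1 (c T) := rfl

variable {x}

lemma map_face (φ : L →ₗ[A] L') {p : ℕ} (c : cechC A x L p) (S T : Finset (Fin n)) :
    cechL.map x φ T (face x c S T) = face x (map x φ p c) S T := by
  unfold face
  split_ifs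
  · rw [map_cechMap, map_apply]
  · exact map_zero _

lemma map_cechD (φ : L →ₗ[A] L') (p : ℕ) (c : cechC A x L p) :
    map x φ (p + 1) (cechD A x L p c) = cechD A x L' p (map x φ p c) := by
  funext T
  simp only [map_apply, cechD_apply, map_sum, map_smul, map_face]

lemma map_cechDprev (φ : L →ₗ[A] L') (p : ℕ) (c : cechC A x L (p - 1)) :
    map x φ p (cechDprev A x L p c) = cechDprev A x L' p (map x φ (p - 1) c) := by
  cases p with
  | zero => exact map_zero _
  | succ q => exact map_cechD φ q c

lemma map_injective {φ : L →ₗ[A] L'} (hφ : Injective φ) (p : ℕ) : Injective (map x φ p) :=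
  Injective.piMap fun T : {T : Finset (Fin n) // T.card = p} => cechL.map_injective x hφ T.1

lemma map_surjective {φ : L →ₗ[A] L'} (hφ : Surjective φ) (p : ℕ) : Surjective (map x φ p) :=
  Surjective.piMap fun T : {T : Finset (Fin n) // T.card = p} => cechL.map_surjective x hφ T.1

lemma map_exact {φ : L →ₗ[A] L'} {ψ : L' →ₗ[A] L''} (h : Exact φ ψ) (p : ℕ) :
    Exact (map x φ p) (map x ψ p) := fun c => by
  refine ⟨fun hc => ?_, ?_⟩
  · choose b hb using fun T : {T : Finset (Fin n) // T.card = p} =>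
      (cechL.map_exact x h T.1 (c T)).1 (congrFun hc T)
    exact ⟨b, funext hb⟩
  · rintro ⟨b, rfl⟩
    exact funext fun T => (cechL.map_exact x h T.1).apply_apply_eq_zero (b T)

end cechC

end CechDifferential

end

noncomputable section LocalCohomology

open Function

variable {A : Type} [CommRing A] {n : ℕ} (x : Fin n → A)
variable {L L' L'' : Type} [AddCommGroup L] [Module A L] [AddCommGroup L'] [Module A L']
  [AddCommGroup L''] [Module A L'']

namespace cechC

/-- The submodule of Čech cocycles. -/
abbrev cocycles (L : Type) [AddCommGroup L] [Module A L] (i : ℕ) : Submodule A (cechC A x L i) :=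
  LinearMap.ker (cechD A x L i)

/-- The Čech differential with values in cocycles. -/
def toCocycles (L : Type) [AddCommGroup L] [Module A L] (i : ℕ) :
    cechC A x L i →ₗ[A] cocycles x L (i + 1) :=
  (cechD A x L i).codRestrict _ cechD_cechD

/-- The map induced by `φ : L → L'` on Čech cocycles. -/
def mapCocycles (φ : L →ₗ[A] L') (i : ℕ) : cocycles x L i →ₗ[A] cocycles x L' i :=
  (map x φ i).restrict fun c (hc : cechD A x L i c = 0) => by
    rw [LinearMap.mem_ker, ← map_cechD, hc, map_zero]

variable {x} {φ : L →ₗ[A] L'} {ψ : L' →ₗ[A] L''}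

lemma mapCocycles_injective (hφ : Injective φ) (i : ℕ) : Injective (mapCocycles x φ i) :=
  fun _ _ h => Subtype.ext (map_injective hφ i (congrArg Subtype.val h))

lemma mapCocycles_exact (hφ : Injective φ) (h : Exact φ ψ) (i : ℕ) :
    Exact (mapCocycles x φ i) (mapCocycles x ψ i) := fun z => by
  refine ⟨fun hz => ?_, ?_⟩
  · obtain ⟨c, hc⟩ := (map_exact h i z.1).1 (congrArg Subtype.val hz)
    have hDc : cechD A x L i c = 0 := by
      apply map_injective hφ
      rw [map_cechD, hc, map_zero]
      exact z.2
    exact ⟨⟨c, hDc⟩, Subtype.ext hc⟩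
  · rintro ⟨c, rfl⟩
    exact Subtype.ext ((map_exact h i).apply_apply_eq_zero c.1)

end cechC

open cechC

namespace lcMod

/-- The cohomology class of a Čech cocycle. -/
def mk (L : Type) [AddCommGroup L] [Module A L] (i : ℕ) : cocycles x L i →ₗ[A] lcMod A x L i :=
  Submodule.mkQ ((LinearMap.range (cechDprev A x L i)).comap (cocycles x L i).subtype)

variable {x}

lemma mk_surjective (i : ℕ) : Surjective (mk x L i) :=
  Submodule.mkQ_surjective _

lemma mk_eq_zero_iff {i : ℕ} (z : cocycles x L i) :
    mk x L i z = 0 ↔ ∃ b, cechDprev A x L i b = z.1 :=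
  Submodule.Quotient.mk_eq_zero _

lemma mk_zero_injective : Injective (mk x L 0) :=
  (injective_iff_map_eq_zero _).2 fun z hz => by
    obtain ⟨b, hb⟩ := (mk_eq_zero_iff z).1 hz
    exact Subtype.ext hb.symm

lemma exact_toCocycles_mk (i : ℕ) : Exact (toCocycles x L i) (mk x L (i + 1)) := fun z =>
  (mk_eq_zero_iff z).trans
    ⟨fun ⟨b, hb⟩ => ⟨b, Subtype.ext hb⟩, fun ⟨b, hb⟩ => ⟨b, congrArg Subtype.val hb⟩⟩

lemma exact_subtype_toCocycles (i : ℕ) : Exact (cocycles x L i).subtype (toCocycles x L i) :=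
  fun c => ⟨fun hc => ⟨⟨c, congrArg Subtype.val hc⟩, rfl⟩, by
    rintro ⟨z, rfl⟩
    exact Subtype.ext z.2⟩

variable (x) in
/-- The map out of local cohomology induced by a linear map on cocycles that vanishes on
coboundaries. -/
def lift {V : Type} [AddCommGroup V] [Module A V] (i : ℕ) (f : cocycles x L i →ₗ[A] V)
    (hf : ∀ z : cocycles x L i, (∃ b, cechDprev A x L i b = z.1) → f z = 0) :
    lcMod A x L i →ₗ[A] V :=
  Submodule.liftQ _ f hf

variable (x) in
/-- The map induced by `φ : L → L'` on local cohomology. -/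
def map (φ : L →ₗ[A] L') (i : ℕ) : lcMod A x L i →ₗ[A] lcMod A x L' i :=
  lift x i (mk x L' i ∘ₗ mapCocycles x φ i) fun z ⟨b, hb⟩ =>
    (mk_eq_zero_iff _).2 ⟨cechC.map x φ (i - 1) b, by rw [← map_cechDprev, hb]; rfl⟩

@[simp] lemma map_mk (φ : L →ₗ[A] L') (i : ℕ) (z : cocycles x L i) :
    map x φ i (mk x L i z) = mk x L' i (mapCocycles x φ i z) := rfl

lemma map_comp_apply (φ : L →ₗ[A] L') (ψ : L' →ₗ[A] L'') (i : ℕ) (h : lcMod A x L i) :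
    map x (ψ ∘ₗ φ) i h = map x ψ i (map x φ i h) := by
  obtain ⟨z, rfl⟩ := mk_surjective i h
  exact congrArg (mk x L'' i) (Subtype.ext (funext fun T => cechL.map_comp_apply x φ ψ T.1 (z.1 T)))

lemma map_id_apply (i : ℕ) (h : lcMod A x L i) : map x LinearMap.id i h = h := by
  obtain ⟨z, rfl⟩ := mk_surjective i h
  exact congrArg (mk x L i) (Subtype.ext (funext fun T => cechL.map_id_apply x T.1 (z.1 T)))

protected lemma map_add (φ ψ : L →ₗ[A] L') (i : ℕ) :
    map x (φ + ψ) i = map x φ i + map x ψ i := by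
  ext h
  obtain ⟨z, rfl⟩ := mk_surjective i h
  rw [LinearMap.add_apply, map_mk, map_mk, map_mk, ← map_add]
  exact congrArg (mk x L' i) (Subtype.ext (funext fun T =>
    LinearMap.congr_fun (cechL.map_add x φ ψ T.1) (z.1 T)))

protected lemma map_sum {ι : Type*} (s : Finset ι) (φ : ι → L →ₗ[A] L') (i : ℕ) :
    map x (∑ k ∈ s, φ k) i = ∑ k ∈ s, map x (φ k) i :=
  map_sum (AddMonoidHom.mk' (map x · i) fun φ ψ => lcMod.map_add φ ψ i) φ s

protected lemma map_smul (a : A) (φ : L →ₗ[A] L') (i : ℕ) :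
    map x (a • φ) i = a • map x φ i := by
  ext h
  obtain ⟨z, rfl⟩ := mk_surjective i h
  rw [LinearMap.smul_apply, map_mk, map_mk, ← map_smul]
  exact congrArg (mk x L' i) (Subtype.ext (funext fun T =>
    LinearMap.congr_fun (cechL.map_smul x a φ T.1) (z.1 T)))

lemma map_smul_id_apply (a : A) (i : ℕ) (h : lcMod A x L i) :
    map x (a • LinearMap.id : L →ₗ[A] L) i h = a • h := by
  rw [lcMod.map_smul, LinearMap.smul_apply, map_id_apply]

lemma subsingleton_of_lt {i : ℕ} (hi : n < i) : Subsingleton (lcMod A x L i) := by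
  have hempty : IsEmpty {S : Finset (Fin n) // S.card = i} :=
    ⟨fun S => by simpa [S.2, hi.not_ge] using S.1.card_le_univ⟩
  exact (mk_surjective i).subsingleton

end lcMod

lemma cechIsBoundary_iff {i : ℕ} (c : cechC A x L i) :
    cechIsBoundary A x L i c ↔ ∃ b, cechDprev A x L i b = c := by
  cases i with
  | zero => exact ⟨fun h => ⟨0, h.symm⟩, fun ⟨_, hb⟩ => hb.symm⟩
  | succ i => exact Iff.rfl

lemma lcVanish_iff (i : ℕ) : lcVanish A x L i ↔ Subsingleton (lcMod A x L i) := by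
  rw [subsingleton_iff_forall_eq 0, (lcMod.mk_surjective (x := x) (L := L) i).forall]
  simp only [lcMod.mk_eq_zero_iff, Subtype.forall, lcVanish, cechIsBoundary_iff]
  rfl

/-- The sequence `0 → L → L' → L'' → 0` given by `φ` and `ψ` is exact. -/
structure IsShortExact (φ : L →ₗ[A] L') (ψ : L' →ₗ[A] L'') : Prop where
  injective : Injective φ
  surjective : Surjective ψ
  exact : Exact φ ψ

namespace IsShortExact

lemma subtype_mkQ (P : Submodule A L) : IsShortExact P.subtype P.mkQ :=
  ⟨P.injective_subtype, P.mkQ_surjective, LinearMap.exact_subtype_mkQ P⟩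

lemma subtype_ker {φ : L →ₗ[A] L'} (hφ : Surjective φ) : IsShortExact (LinearMap.ker φ).subtype φ :=
  ⟨Subtype.val_injective, hφ, φ.exact_subtype_ker_map⟩

lemma ker_rangeRestrict (φ : L →ₗ[A] L') :
    IsShortExact (LinearMap.ker φ).subtype φ.rangeRestrict :=
  ⟨Submodule.injective_subtype _, φ.surjective_rangeRestrict, by
    rw [LinearMap.exact_iff, LinearMap.ker_rangeRestrict, Submodule.range_subtype]⟩

end IsShortExact

namespace lcMod

variable {x} {φ : L →ₗ[A] L'} {ψ : L' →ₗ[A] L''}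

/-- The connecting map of the long exact sequence on cocycles: the snake lemma applied to the
differential from `i`-cochains to `(i + 1)`-cocycles. -/
def δCocycles (h : IsShortExact φ ψ) (i : ℕ) : cocycles x L'' i →ₗ[A] lcMod A x L (i + 1) :=
  SnakeLemma.δ' (toCocycles x L i) (toCocycles x L' i) (toCocycles x L'' i)
    (cechC.map x φ i) (cechC.map x ψ i) (map_exact h.exact i)
    (mapCocycles x φ (i + 1)) (mapCocycles x ψ (i + 1)) (mapCocycles_exact h.injective h.exact _)
    (LinearMap.ext fun c => Subtype.ext (map_cechD φ i c))
    (LinearMap.ext fun c => Subtype.ext (map_cechD ψ i c))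
    (cocycles x L'' i).subtype (exact_subtype_toCocycles i)
    (mk x L (i + 1)) (exact_toCocycles_mk i)
    (map_surjective h.surjective i) (mapCocycles_injective h.injective _)

lemma exact_mapCocycles_δCocycles (h : IsShortExact φ ψ) (i : ℕ) :
    Exact (mapCocycles x ψ i) (δCocycles h i) :=
  SnakeLemma.exact_δ'_right _ _ _ _ _ _ _ _ _ _ _ (cocycles x L' i).subtype
    (exact_subtype_toCocycles i) _ _ _ _ _ _ _ rfl (Submodule.injective_subtype _)

/-- The connecting map of the long exact sequence of local cohomology. -/
def δ (h : IsShortExact φ ψ) (i : ℕ) : lcMod A x L'' i →ₗ[A] lcMod A x L (i + 1) :=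
  lift x i (δCocycles h i) fun z ⟨b, hb⟩ => by
    obtain ⟨b', rfl⟩ := map_surjective h.surjective _ b
    refine (exact_mapCocycles_δCocycles h i z).2 ⟨⟨_, cechD_cechDprev b'⟩, Subtype.ext ?_⟩
    rw [← hb, ← map_cechDprev]
    rfl

lemma δ_mk (h : IsShortExact φ ψ) {i : ℕ} (z : cocycles x L'' i) :
    δ h i (mk x L'' i z) = δCocycles h i z := rfl

lemma δ_mk_eq_mk (h : IsShortExact φ ψ) {i : ℕ} (z : cocycles x L'' i) (e : cocycles x L (i + 1))
    (b : cechC A x L' i) (hb : cechC.map x ψ i b = z.1)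
    (he : cechC.map x φ (i + 1) e.1 = cechD A x L' i b) :
    δ h i (mk x L'' i z) = mk x L (i + 1) e :=
  (δ_mk h z).trans <|
    SnakeLemma.δ'_eq _ _ _ _ _ _ _ _ _ _ _ _ _ _ _ _ _ z b hb e (Subtype.ext he)

lemma exact_map_map (h : IsShortExact φ ψ) (i : ℕ) : Exact (map x φ i) (map x ψ i) := by
  refine (mk_surjective i).forall.2 fun z => ⟨fun hz => ?_, ?_⟩
  · obtain ⟨b, hb⟩ := (mk_eq_zero_iff _).1 hz
    obtain ⟨b, rfl⟩ := map_surjective h.surjective _ b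
    have hker : mapCocycles x ψ i (z - ⟨_, cechD_cechDprev b⟩) = 0 := by
      rw [map_sub, sub_eq_zero]
      exact Subtype.ext (hb.symm.trans (map_cechDprev ψ i b).symm)
    obtain ⟨c, hc⟩ := (mapCocycles_exact h.injective h.exact i _).1 hker
    refine ⟨mk x L i c, ?_⟩
    rw [map_mk, hc, map_sub, (mk_eq_zero_iff ⟨_, cechD_cechDprev b⟩).2 ⟨b, rfl⟩, sub_zero]
  · rintro ⟨u, hu⟩
    obtain ⟨c, rfl⟩ := mk_surjective i u
    rw [← hu, map_mk, map_mk, (mapCocycles_exact h.injective h.exact i).apply_apply_eq_zero,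
      map_zero]

lemma exact_map_δ (h : IsShortExact φ ψ) (i : ℕ) : Exact (map x ψ i) (δ (x := x) h i) := by
  refine (mk_surjective i).forall.2 fun z => (exact_mapCocycles_δCocycles h i z).trans ⟨?_, ?_⟩
  · rintro ⟨c, rfl⟩
    exact ⟨mk x L' i c, rfl⟩
  · rintro ⟨u, hu⟩
    refine (exact_mapCocycles_δCocycles h i z).1 ?_
    obtain ⟨c, rfl⟩ := mk_surjective i u
    rw [← δ_mk, ← hu]
    exact (exact_mapCocycles_δCocycles h i).apply_apply_eq_zero c

lemma exact_δ_map (h : IsShortExact φ ψ) (i : ℕ) :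
    Exact (δ (x := x) h i) (map x φ (i + 1)) := by
  have hexact : Exact (δCocycles (x := x) h i) (map x φ (i + 1)) :=
    SnakeLemma.exact_δ'_left _ _ _ _ _ _ _ _ _ _ _ _ _ _ _ (mk x L' (i + 1))
      (exact_toCocycles_mk i) _ _ _ rfl (mk_surjective _)
  intro u
  rw [hexact u, Set.mem_range, Set.mem_range, (mk_surjective i).exists]
  rfl

lemma map_zero_injective (hφ : Injective φ) : Injective (map x φ 0) :=
  (injective_iff_map_eq_zero _).2 <| (mk_surjective 0).forall.2 fun z hz => by
    rw [map_mk, ← map_zero (mk x L' 0), mk_zero_injective.eq_iff] at hz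
    rw [(injective_iff_map_eq_zero _).1 (mapCocycles_injective hφ 0) z hz, map_zero]

end lcMod

end LocalCohomology

noncomputable section Torsion

open Function

section IsTorsionPowers

variable {A : Type} [CommRing A] (a : A)
variable {P P' P'' : Type} [AddCommGroup P] [Module A P] [AddCommGroup P'] [Module A P']
  [AddCommGroup P''] [Module A P'']

variable {a} in
lemma isTorsion'_powers_of_exact {f : P →ₗ[A] P'} {g : P' →ₗ[A] P''} (h : Exact f g)
    (hP : Module.IsTorsion' P (Submonoid.powers a))
    (hP'' : Module.IsTorsion' P'' (Submonoid.powers a)) :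
    Module.IsTorsion' P' (Submonoid.powers a) := by
  rw [Submodule.isTorsion'_powers_iff] at hP hP'' ⊢
  intro u
  obtain ⟨k, hk⟩ := hP'' (g u)
  obtain ⟨v, hv⟩ := (h (a ^ k • u)).1 (by rw [map_smul, hk])
  obtain ⟨l, hl⟩ := hP v
  exact ⟨l + k, by rw [pow_add, mul_smul, ← hv, ← map_smul, hl, map_zero]⟩

lemma isTorsion'_powers_ker_mkLinearMap :
    Module.IsTorsion' (LinearMap.ker (LocalizedModule.mkLinearMap (Submonoid.powers a) P))
      (Submonoid.powers a) := fun u => by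
  obtain ⟨s, hs⟩ := (IsLocalizedModule.eq_zero_iff (Submonoid.powers a) _).1 u.2
  exact ⟨s, Subtype.ext hs⟩

lemma isTorsion'_powers_quotient_range_mkLinearMap :
    Module.IsTorsion'
      (_ ⧸ LinearMap.range (LocalizedModule.mkLinearMap (Submonoid.powers a) P))
      (Submonoid.powers a) := by
  intro u
  obtain ⟨c, rfl⟩ := Submodule.mkQ_surjective _ u
  obtain ⟨⟨m, s⟩, hs⟩ := IsLocalizedModule.surj (Submonoid.powers a)
    (LocalizedModule.mkLinearMap (Submonoid.powers a) P) c
  exact ⟨s, (Submodule.Quotient.mk_eq_zero _).2 ⟨m, hs.symm⟩⟩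

lemma localizedModule_powers_smul_bijective :
    Bijective fun c : LocalizedModule (Submonoid.powers a) P => a • c :=
  (Module.End.isUnit_iff _).1 <| IsLocalizedModule.map_units
    (LocalizedModule.mkLinearMap (Submonoid.powers a) P) ⟨a, Submonoid.mem_powers a⟩

end IsTorsionPowers

variable {A : Type} [CommRing A] {n : ℕ} {x : Fin n → A}
variable {L : Type} [AddCommGroup L] [Module A L]

open cechL cechC

lemma cechMap_injective {S T : Finset (Fin n)} (hST : S ⊆ T)
    (hL : Injective fun m : L => (∏ i ∈ T \ S, x i) • m) : Injective (cechMap A x L S T hST) := by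
  refine (injective_iff_map_eq_zero _).2 fun c hc => ?_
  obtain ⟨k, m, rfl⟩ := exists_eq_frac x S c
  rw [cechMap_frac, frac_eq_zero_iff] at hc
  obtain ⟨e, he⟩ := hc
  rw [← Finset.prod_sdiff hST, mul_pow, smul_smul, mul_right_comm, ← pow_add, mul_smul] at he
  refine (frac_eq_zero_iff x S k m).2 ⟨e, hL.iterate (e + k) ?_⟩
  simpa only [smul_iterate, smul_zero] using he

lemma cechMap_surjective {S T : Finset (Fin n)} (hST : S ⊆ T)
    (hL : Surjective fun m : L => (∏ i ∈ T \ S, x i) • m) :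
    Surjective (cechMap A x L S T hST) := fun c => by
  obtain ⟨k, m, rfl⟩ := exists_eq_frac x T c
  obtain ⟨m', rfl⟩ := hL.iterate k m
  exact ⟨frac x S k m', by rw [cechMap_frac, smul_iterate]⟩

lemma cechMap_insert_bijective {j : Fin n} (hL : Bijective fun m : L => x j • m)
    {S : Finset (Fin n)} (hj : j ∉ S) :
    Bijective (cechMap A x L S (insert j S) (Finset.subset_insert j S)) := by
  have hprod : ∏ i ∈ insert j S \ S, x i = x j := by
    rw [Finset.insert_sdiff_cancel hj, Finset.prod_singleton]
  exact ⟨cechMap_injective _ (hprod ▸ hL.1), cechMap_surjective _ (hprod ▸ hL.2)⟩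

namespace cechC

/-- A cocycle supported on the sets avoiding `j` restricts to zero on `insert j S`. -/
lemma eq_zero_of_cechD_eq_zero {j : Fin n} (hL : Bijective fun m : L => x j • m) {p : ℕ}
    {u : cechC A x L p} (hu : cechD A x L p u = 0) (huj : ∀ T, j ∈ T.1 → u T = 0) : u = 0 := by
  funext ⟨S, hS⟩
  by_cases hj : j ∈ S
  · exact huj _ hj
  have hcard : (insert j S).card = p + 1 := by rw [Finset.card_insert_of_notMem hj, hS]
  have hface : ∀ k ∈ insert j S, k ≠ j →
      cechSign A k (insert j S) • face x u ((insert j S).erase k) (insert j S) = 0 := by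
    intro k hk hkj
    have hcard' : ((insert j S).erase k).card = p := by rw [Finset.card_erase_of_mem hk, hcard]; rfl
    rw [face_eq u hcard' (Finset.erase_subset _ _), huj _ (by simp [hkj.symm]), map_zero, smul_zero]
  have hDu := congrFun hu ⟨insert j S, hcard⟩
  rw [cechD_apply, Finset.sum_eq_single_of_mem j (Finset.mem_insert_self j S) hface,
    Finset.erase_insert hj, face_eq u hS (Finset.subset_insert j S)] at hDu
  refine (injective_iff_map_eq_zero _).1 (cechMap_insert_bijective hL hj).1 _ ?_
  rw [← one_smul A (cechMap A x L _ _ _ _), ← cechSign_mul_self j (insert j S), mul_smul, hDu]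
  exact smul_zero _

/-- The contracting homotopy: `b_S` is `± c_{S ∪ {j}}` read through the isomorphism
`L_S → L_{S ∪ {j}}`. -/
lemma exists_cechD_apply_eq {j : Fin n} (hL : Bijective fun m : L => x j • m) {p : ℕ}
    (c : cechC A x L (p + 1)) :
    ∃ b : cechC A x L p, ∀ T, j ∈ T.1 → cechD A x L p b T = c T := by
  have hlift : ∀ S : {S : Finset (Fin n) // S.card = p}, ∃ b : cechL A x L S.1,
      (j ∈ S.1 → b = 0) ∧ ∀ hj : j ∉ S.1,
        cechMap A x L S.1 (insert j S.1) (Finset.subset_insert j S.1) b =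
          cechSign A j (insert j S.1) •
            c ⟨insert j S.1, by rw [Finset.card_insert_of_notMem hj, S.2]⟩ := fun S => by
    by_cases hj : j ∈ S.1
    · exact ⟨0, fun _ => rfl, fun h => absurd hj h⟩
    · obtain ⟨b, hb⟩ := (cechMap_insert_bijective hL hj).2
        (cechSign A j (insert j S.1) •
          c ⟨insert j S.1, by rw [Finset.card_insert_of_notMem hj, S.2]⟩)
      exact ⟨b, fun h => absurd h hj, fun _ => hb⟩
  choose b hb_mem hb_notMem using hlift
  refine ⟨b, fun ⟨T, hT⟩ hj => ?_⟩
  obtain ⟨S, hjS, rfl⟩ : ∃ S, j ∉ S ∧ T = insert j S :=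
    ⟨T.erase j, Finset.notMem_erase j T, (Finset.insert_erase hj).symm⟩
  have hS : S.card = p := by simpa [Finset.card_insert_of_notMem hjS] using hT
  rw [cechD_apply, Finset.sum_eq_single_of_mem j hj, Finset.erase_insert hjS,
    face_eq b hS (Finset.subset_insert j S), hb_notMem ⟨S, hS⟩ hjS, smul_smul, cechSign_mul_self,
    one_smul]
  intro k hk hkj
  have hcard : ((insert j S).erase k).card = p := by rw [Finset.card_erase_of_mem hk, hT]; rfl
  rw [face_eq b hcard (Finset.erase_subset _ _), hb_mem _ (by simp [hkj.symm]), map_zero, smul_zero]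

end cechC

namespace lcMod

lemma subsingleton_of_smul_bijective {j : Fin n} (hL : Bijective fun m : L => x j • m) (i : ℕ) :
    Subsingleton (lcMod A x L i) := by
  refine subsingleton_of_forall_eq 0 ((mk_surjective i).forall.2 fun z => ?_)
  rw [mk_eq_zero_iff]
  cases i with
  | zero =>
    have hz : z.1 = 0 := eq_zero_of_cechD_eq_zero hL z.2 fun T hj => by
      simp [Finset.card_eq_zero.1 T.2] at hj
    exact ⟨0, hz.symm⟩
  | succ i =>
    obtain ⟨b, hb⟩ := exists_cechD_apply_eq hL z.1
    refine ⟨b, sub_eq_zero.1 (eq_zero_of_cechD_eq_zero hL ?_ fun T hj => ?_)⟩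
    · rw [map_sub]
      exact sub_eq_zero.2 ((cechD_cechD b).trans z.2.symm)
    · exact sub_eq_zero.2 (hb T hj)

lemma isTorsion'_powers_of_isTorsion' {a : A} (hL : Module.IsTorsion' L (Submonoid.powers a))
    (i : ℕ) : Module.IsTorsion' (lcMod A x L i) (Submonoid.powers a) := by
  rw [Submodule.isTorsion'_powers_iff] at hL ⊢
  refine (mk_surjective i).forall.2 fun z => ?_
  have hcomp : ∀ T, ∃ k, a ^ k • z.1 T = 0 := fun T => by
    obtain ⟨k, m, hm⟩ := exists_eq_frac x T.1 (z.1 T)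
    obtain ⟨l, hl⟩ := hL m
    exact ⟨l, by rw [hm, ← map_smul, hl, map_zero]⟩
  choose k hk using hcomp
  refine ⟨Finset.univ.sup k, ?_⟩
  have hz : a ^ Finset.univ.sup k • z = 0 := Subtype.ext <| funext fun T => by
    obtain ⟨e, he⟩ := pow_dvd_pow a (Finset.le_sup (f := k) (Finset.mem_univ T))
    change a ^ _ • z.1 T = 0
    rw [he, mul_comm, mul_smul, hk, smul_zero]
  rw [← map_smul, hz, map_zero]

/-- Compare `L` with its localization at `x j`, which has no cohomology; the kernel and the
cokernel of `L → L_{x j}` are torsion. -/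
lemma isTorsion'_powers (j : Fin n) (i : ℕ) :
    Module.IsTorsion' (lcMod A x L i) (Submonoid.powers (x j)) := by
  let ι := LocalizedModule.mkLinearMap (Submonoid.powers (x j)) L
  have hrange : Module.IsTorsion' (lcMod A x (LinearMap.range ι) i)
      (Submonoid.powers (x j)) := by
    have hloc := subsingleton_of_smul_bijective (x := x) (j := j)
      (localizedModule_powers_smul_bijective (P := L) (x j)) i
    have hses := IsShortExact.subtype_mkQ (LinearMap.range ι)
    cases i with
    | zero =>
      have := (map_zero_injective (x := x) hses.injective).subsingleton
      exact fun h => ⟨1, Subsingleton.elim _ _⟩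
    | succ i =>
      exact isTorsion'_powers_of_exact (exact_δ_map hses i)
        (isTorsion'_powers_of_isTorsion' (isTorsion'_powers_quotient_range_mkLinearMap (x j)) i)
        fun h => ⟨1, Subsingleton.elim _ _⟩
  exact isTorsion'_powers_of_exact (exact_map_map (IsShortExact.ker_rangeRestrict ι) i)
    (isTorsion'_powers_of_isTorsion' (isTorsion'_powers_ker_mkLinearMap (x j)) i) hrange

end lcMod

end Torsion

noncomputable section Gradings

open Function

variable {R : Type} [CommRing R] {A : Type} [CommRing A] [Algebra R A] {n : ℕ} {x : Fin n → A}
  {w : Fin n → ℤ}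
variable {L L' L'' : Type} [AddCommGroup L] [Module A L] [AddCommGroup L'] [Module A L']
  [AddCommGroup L''] [Module A L'']

variable (R x w L) in
/-- A `ℤ`-grading of the `A`-module `L` by `R`-submodules in which multiplication by `x j` has
degree `w j`. It is presented by the projections onto the graded pieces, because these pass to
localizations, products, kernels and quotients without any bookkeeping of direct sums. -/
structure WeightGrading where
  /-- The projection onto the piece of degree `μ`. -/
  proj : ℤ → L →+ L
  proj_algebraMap_smul : ∀ μ (r : R) m, proj μ (algebraMap R A r • m) = algebraMap R A r • proj μ m
  proj_proj : ∀ μ ν m, proj μ (proj ν m) = if μ = ν then proj ν m else 0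
  proj_smul : ∀ μ j m, proj (μ + w j) (x j • m) = x j • proj μ m
  exists_sum_proj : ∀ m, ∃ E : Finset ℤ, ∀ E', E ⊆ E' → ∑ μ ∈ E', proj μ m = m

namespace WeightGrading

open cechL cechC

/-- `φ` is homogeneous of degree `e`. -/
def IsHomogeneous (g : WeightGrading R x w L) (g' : WeightGrading R x w L') (e : ℤ)
    (φ : L →ₗ[A] L') : Prop :=
  ∀ μ m, φ (g.proj μ m) = g'.proj (μ + e) (φ m)

section Basic

variable (g : WeightGrading R x w L)

lemma proj_idem (μ : ℤ) (m : L) : g.proj μ (g.proj μ m) = g.proj μ m := by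
  rw [g.proj_proj, if_pos rfl]

lemma proj_prod_smul (T : Finset (Fin n)) (μ : ℤ) (m : L) :
    g.proj (μ + ∑ j ∈ T, w j) ((∏ j ∈ T, x j) • m) = (∏ j ∈ T, x j) • g.proj μ m := by
  classical
  induction T using Finset.induction_on with
  | empty => simp
  | insert j T hj ih =>
    rw [Finset.sum_insert hj, Finset.prod_insert hj, mul_smul, mul_smul, ← ih, ← g.proj_smul,
      add_right_comm, add_assoc]

lemma proj_prod_pow_smul (T : Finset (Fin n)) (k : ℕ) (μ : ℤ) (m : L) :
    g.proj (μ + k * ∑ j ∈ T, w j) ((∏ j ∈ T, x j) ^ k • m) =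
      (∏ j ∈ T, x j) ^ k • g.proj μ m := by
  induction k with
  | zero => simp
  | succ k ih =>
    rw [pow_succ', mul_smul, mul_smul, ← ih, ← g.proj_prod_smul, Nat.cast_succ, add_one_mul,
      add_assoc]

lemma isHomogeneous_smul_id (j : Fin n) : IsHomogeneous g g (w j) (x j • LinearMap.id) :=
  fun μ m => (g.proj_smul μ j m).symm

lemma proj_cechSign_smul (μ : ℤ) (j : Fin n) (T : Finset (Fin n)) (m : L) :
    g.proj μ (cechSign A j T • m) = cechSign A j T • g.proj μ m := by
  rcases neg_one_pow_eq_or A (T.filter (· < j)).card with h | h <;> simp [cechSign, h]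

end Basic

section Localization

variable (g : WeightGrading R x w L)

lemma frac_proj_eq_of_frac_eq {T : Finset (Fin n)} (μ : ℤ) {k k' : ℕ} {m m' : L}
    (h : frac x T k m = frac x T k' m') :
    frac x T k (g.proj (μ + k * ∑ j ∈ T, w j) m) =
      frac x T k' (g.proj (μ + k' * ∑ j ∈ T, w j) m') := by
  rw [← frac_add_right x T k k', ← frac_add_right x T k' k, add_comm k' k, ← sub_eq_zero,
    ← map_sub, frac_eq_zero_iff] at h ⊢
  obtain ⟨e, he⟩ := h
  refine ⟨e, ?_⟩
  rw [← g.proj_prod_pow_smul, ← g.proj_prod_pow_smul, add_right_comm μ, ← map_sub,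
    ← g.proj_prod_pow_smul, he, map_zero]

/-- The degree-`μ` part of a fraction, computed from a chosen presentation. -/
def locProj (T : Finset (Fin n)) (μ : ℤ) (c : cechL A x L T) : cechL A x L T :=
  let h := exists_eq_frac x T c
  frac x T h.choose (g.proj (μ + h.choose * ∑ j ∈ T, w j) h.choose_spec.choose)

lemma locProj_frac (T : Finset (Fin n)) (μ : ℤ) (k : ℕ) (m : L) :
    g.locProj T μ (frac x T k m) = frac x T k (g.proj (μ + k * ∑ j ∈ T, w j) m) :=
  g.frac_proj_eq_of_frac_eq μ (exists_eq_frac x T (frac x T k m)).choose_spec.choose_spec.symm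

/-- The grading induced on the localization attached to `T`. -/
def loc (T : Finset (Fin n)) : WeightGrading R x w (cechL A x L T) where
  proj μ := AddMonoidHom.mk' (g.locProj T μ) fun c c' => by
    obtain ⟨k, m, m', rfl, rfl⟩ := exists_eq_frac_pair x T c c'
    simp only [← map_add, locProj_frac]
  proj_algebraMap_smul μ r c := by
    obtain ⟨k, m, rfl⟩ := exists_eq_frac x T c
    simp only [AddMonoidHom.mk'_apply, ← map_smul, locProj_frac, g.proj_algebraMap_smul]
  proj_proj μ ν c := by
    obtain ⟨k, m, rfl⟩ := exists_eq_frac x T c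
    simp only [AddMonoidHom.mk'_apply, locProj_frac, g.proj_proj, add_left_inj]
    split_ifs <;> simp only [map_zero]
  proj_smul μ j c := by
    obtain ⟨k, m, rfl⟩ := exists_eq_frac x T c
    simp only [AddMonoidHom.mk'_apply, ← map_smul, locProj_frac, ← g.proj_smul, add_right_comm]
  exists_sum_proj c := by
    obtain ⟨k, m, rfl⟩ := exists_eq_frac x T c
    obtain ⟨E, hE⟩ := g.exists_sum_proj m
    let shift := Equiv.addRight (k * ∑ j ∈ T, w j)
    refine ⟨E.map shift.symm, fun E' hE' => ?_⟩
    have hsum := hE (E'.map shift) (Finset.map_symm_subset.1 hE')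
    rw [Finset.sum_map] at hsum
    simp only [AddMonoidHom.mk'_apply, locProj_frac, ← map_sum]
    exact congrArg _ hsum

lemma loc_proj_frac (T : Finset (Fin n)) (μ : ℤ) (k : ℕ) (m : L) :
    (g.loc T).proj μ (frac x T k m) = frac x T k (g.proj (μ + k * ∑ j ∈ T, w j) m) :=
  g.locProj_frac T μ k m

lemma cechMap_proj {S T : Finset (Fin n)} (hST : S ⊆ T) (μ : ℤ) (c : cechL A x L S) :
    cechMap A x L S T hST ((g.loc S).proj μ c) = (g.loc T).proj μ (cechMap A x L S T hST c) := by
  obtain ⟨k, m, rfl⟩ := exists_eq_frac x S c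
  simp only [loc_proj_frac, cechMap_frac, ← g.proj_prod_pow_smul]
  rw [← Finset.sum_sdiff hST, mul_add, add_right_comm, add_assoc]

end Localization

section Constructions

/-- The grading of a finite product of graded modules. -/
def pi {ι : Type} [Finite ι] {V : ι → Type} [∀ i, AddCommGroup (V i)] [∀ i, Module A (V i)]
    (g : ∀ i, WeightGrading R x w (V i)) : WeightGrading R x w (∀ i, V i) where
  proj μ := AddMonoidHom.mk' (fun c i => (g i).proj μ (c i)) fun c c' => by ext i; simp
  proj_algebraMap_smul μ r c := funext fun i => (g i).proj_algebraMap_smul μ r (c i)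
  proj_proj μ ν c := by
    ext i
    simp only [AddMonoidHom.mk'_apply, (g i).proj_proj]
    split_ifs <;> rfl
  proj_smul μ j c := funext fun i => (g i).proj_smul μ j (c i)
  exists_sum_proj c := by
    classical
    have := Fintype.ofFinite ι
    choose E hE using fun i => (g i).exists_sum_proj (c i)
    refine ⟨Finset.univ.biUnion E, fun E' hE' => funext fun i => ?_⟩
    rw [Finset.sum_apply]
    exact hE i E' ((Finset.subset_biUnion_of_mem E (Finset.mem_univ i)).trans hE')

variable (g : WeightGrading R x w L)

/-- The grading of a homogeneous submodule. -/
def restrict (K : Submodule A L) (hK : ∀ μ, ∀ m ∈ K, g.proj μ m ∈ K) :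
    WeightGrading R x w K where
  proj μ := AddMonoidHom.mk' (fun c => ⟨g.proj μ c.1, hK μ _ c.2⟩) fun c c' => by ext; simp
  proj_algebraMap_smul μ r c := Subtype.ext (g.proj_algebraMap_smul μ r c)
  proj_proj μ ν c := by
    ext
    simp only [AddMonoidHom.mk'_apply, g.proj_proj]
    split_ifs <;> rfl
  proj_smul μ j c := Subtype.ext (g.proj_smul μ j c)
  exists_sum_proj c := by
    obtain ⟨E, hE⟩ := g.exists_sum_proj c.1
    refine ⟨E, fun E' hE' => Subtype.ext ?_⟩
    rw [AddSubmonoidClass.coe_finsetSum]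
    exact hE E' hE'

/-- The grading of the quotient by a homogeneous submodule. -/
def quotient (K : Submodule A L) (hK : ∀ μ, ∀ m ∈ K, g.proj μ m ∈ K) :
    WeightGrading R x w (L ⧸ K) where
  proj μ := QuotientAddGroup.map K.toAddSubgroup K.toAddSubgroup (g.proj μ) (hK μ)
  proj_algebraMap_smul μ r :=
    K.mkQ_surjective.forall.2 fun c => congrArg K.mkQ (g.proj_algebraMap_smul μ r c)
  proj_proj μ ν := K.mkQ_surjective.forall.2 fun c =>
    (congrArg K.mkQ (g.proj_proj μ ν c)).trans (apply_ite K.mkQ _ _ _)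
  proj_smul μ j := K.mkQ_surjective.forall.2 fun c => congrArg K.mkQ (g.proj_smul μ j c)
  exists_sum_proj := K.mkQ_surjective.forall.2 fun c => by
    obtain ⟨E, hE⟩ := g.exists_sum_proj c
    exact ⟨E, fun E' hE' => (map_sum K.mkQ _ _).symm.trans (congrArg K.mkQ (hE E' hE'))⟩

end Constructions

section LocalCohomology

variable (g : WeightGrading R x w L)

/-- The grading of Čech cochains. -/
def cochains (p : ℕ) : WeightGrading R x w (cechC A x L p) := pi fun T => g.loc T.1

lemma face_proj {p : ℕ} (μ : ℤ) (c : cechC A x L p) (S T : Finset (Fin n)) :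
    face x ((g.cochains p).proj μ c) S T = (g.loc T).proj μ (face x c S T) := by
  unfold face
  split_ifs with h
  · exact g.cechMap_proj h.2 μ _
  · exact (map_zero _).symm

lemma cechD_proj (p : ℕ) (μ : ℤ) (c : cechC A x L p) :
    cechD A x L p ((g.cochains p).proj μ c) = (g.cochains (p + 1)).proj μ (cechD A x L p c) := by
  funext T
  change _ = (g.loc T.1).proj μ (cechD A x L p c T)
  simp only [cechD_apply, map_sum, face_proj, proj_cechSign_smul]

lemma cechDprev_proj (p : ℕ) (μ : ℤ) (c : cechC A x L (p - 1)) :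
    cechDprev A x L p ((g.cochains (p - 1)).proj μ c) =
      (g.cochains p).proj μ (cechDprev A x L p c) := by
  cases p with
  | zero => exact (map_zero _).symm
  | succ q => exact g.cechD_proj q μ c

/-- The grading of Čech cocycles. -/
def cocycles (i : ℕ) : WeightGrading R x w (cechC.cocycles x L i) :=
  (g.cochains i).restrict _ fun μ c hc => by
    rw [LinearMap.mem_ker] at hc ⊢
    rw [g.cechD_proj, hc, map_zero]

/-- The grading of local cohomology. -/
def lc (i : ℕ) : WeightGrading R x w (lcMod A x L i) :=
  (g.cocycles i).quotient _ fun μ z ⟨b, hb⟩ =>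
    ⟨(g.cochains (i - 1)).proj μ b, by rw [g.cechDprev_proj, hb]; rfl⟩

lemma lc_proj_mk (i : ℕ) (μ : ℤ) (z : cechC.cocycles x L i) :
    (g.lc i).proj μ (lcMod.mk x L i z) = lcMod.mk x L i ((g.cocycles i).proj μ z) := rfl

end LocalCohomology

namespace IsHomogeneous

variable {g : WeightGrading R x w L} {g' : WeightGrading R x w L'} {g'' : WeightGrading R x w L''}
  {e f : ℤ} {φ : L →ₗ[A] L'} {ψ : L' →ₗ[A] L''}

lemma zero (g : WeightGrading R x w L) (g' : WeightGrading R x w L') (e : ℤ) :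
    IsHomogeneous g g' e 0 := fun _ _ => (map_zero _).symm

lemma mem_ker (h : IsHomogeneous g g' e φ) (μ : ℤ) (m : L) (hm : m ∈ LinearMap.ker φ) :
    g.proj μ m ∈ LinearMap.ker φ := by
  rw [LinearMap.mem_ker] at hm ⊢
  rw [h, hm, map_zero]

lemma mem_range (h : IsHomogeneous g g' e φ) (μ : ℤ) (m : L') (hm : m ∈ LinearMap.range φ) :
    g'.proj μ m ∈ LinearMap.range φ := by
  obtain ⟨v, rfl⟩ := hm
  exact ⟨g.proj (μ - e) v, by rw [h, sub_add_cancel]⟩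

lemma cechL_map (h : IsHomogeneous g g' e φ) (T : Finset (Fin n)) :
    IsHomogeneous (g.loc T) (g'.loc T) e (cechL.map x φ T) := by
  intro μ c
  obtain ⟨k, m, rfl⟩ := exists_eq_frac x T c
  simp only [loc_proj_frac, map_frac, h _ _, add_right_comm]

lemma cechC_map (h : IsHomogeneous g g' e φ) (p : ℕ) :
    IsHomogeneous (g.cochains p) (g'.cochains p) e (cechC.map x φ p) :=
  fun μ c => funext fun T => h.cechL_map T.1 μ (c T)

lemma lcMod_map (h : IsHomogeneous g g' e φ) (i : ℕ) :
    IsHomogeneous (g.lc i) (g'.lc i) e (lcMod.map x φ i) := fun μ =>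
  (lcMod.mk_surjective i).forall.2 fun z =>
    congrArg (lcMod.mk x L' i) (Subtype.ext (h.cechC_map i μ z.1))

lemma lcMod_δ (hφ : IsHomogeneous g g' e φ) (hψ : IsHomogeneous g' g'' f ψ)
    (h : IsShortExact φ ψ) (i : ℕ) :
    IsHomogeneous (g''.lc i) (g.lc (i + 1)) (-(e + f)) (lcMod.δ h i) := fun μ =>
  (lcMod.mk_surjective i).forall.2 fun z => by
    obtain ⟨b, hb⟩ := cechC.map_surjective h.surjective i z.1
    obtain ⟨c, hc⟩ := (cechC.map_exact h.exact (i + 1) (cechD A x L' i b)).1 (by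
      rw [cechC.map_cechD, hb]
      exact z.2)
    have hcoc : cechD A x L (i + 1) c = 0 := cechC.map_injective h.injective (i + 2) (by
      rw [cechC.map_cechD, hc, cechD_cechD, map_zero])
    rw [lcMod.δ_mk_eq_mk h z ⟨c, hcoc⟩ b hb hc, lc_proj_mk, lc_proj_mk]
    refine lcMod.δ_mk_eq_mk h _ _ ((g'.cochains i).proj (μ - f) b) ?_ ?_
    · rw [hψ.cechC_map i, sub_add_cancel, hb]
      rfl
    · rw [g'.cechD_proj, ← hc]
      exact (hφ.cechC_map (i + 1) _ c).trans (by congr 2; ring)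

end IsHomogeneous

end WeightGrading

end Gradings

noncomputable section Finiteness

open Function

variable {R : Type} [CommRing R] {A : Type} [CommRing A] [Algebra R A] {n : ℕ} {x : Fin n → A}
  {w : Fin n → ℤ}
variable {L L' L'' : Type} [AddCommGroup L] [Module A L] [AddCommGroup L'] [Module A L']
  [AddCommGroup L''] [Module A L'']

/-- The `A`-module `L`, regarded as a module over the base ring `R`. It differs from
`RestrictScalars R A L` in that its additive monoid is, for instance search, the one underlying its
additive group. -/
def OverBase (_R _A L : Type) : Type := L

instance : AddCommGroup (OverBase R A L) := inferInstanceAs (AddCommGroup L)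

instance : Module R (OverBase R A L) := Module.compHom L (algebraMap R A)

variable (R) in
/-- An `A`-linear map, regarded as an `R`-linear map. -/
def OverBase.map (φ : L →ₗ[A] L') : OverBase R A L →ₗ[R] OverBase R A L' where
  toFun := φ
  map_add' := φ.map_add
  map_smul' r m := φ.map_smul (algebraMap R A r) m

namespace WeightGrading

/-- The projection to the graded piece of degree `μ`, as a linear map over the base ring. -/
def projLinear (g : WeightGrading R x w L) (μ : ℤ) :
    OverBase R A L →ₗ[R] OverBase R A L where
  toFun := g.proj μ
  map_add' := (g.proj μ).map_add
  map_smul' r m := g.proj_algebraMap_smul μ r m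

/-- The graded piece of degree `μ`, as a module over the base ring. -/
def piece (g : WeightGrading R x w L) (μ : ℤ) : Submodule R (OverBase R A L) :=
  LinearMap.range (g.projLinear μ)

lemma proj_mem_piece (g : WeightGrading R x w L) (μ : ℤ) (m : L) : g.proj μ m ∈ g.piece μ :=
  ⟨m, rfl⟩

lemma mem_piece_iff (g : WeightGrading R x w L) {μ : ℤ} (m : L) :
    m ∈ g.piece μ ↔ g.proj μ m = m := by
  refine ⟨?_, fun h => ⟨m, h⟩⟩
  rintro ⟨l, rfl⟩
  exact g.proj_idem μ l

/-- The graded pieces are finitely generated over the base ring and vanish in large degrees. -/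
structure FiniteBoundedAbove (g : WeightGrading R x w L) : Prop where
  piece_fg : ∀ μ, (g.piece μ).FG
  exists_bound : ∃ B : ℤ, ∀ μ, B ≤ μ → ∀ m, g.proj μ m = 0

lemma piece_fg_of_proj_eq_zero {g : WeightGrading R x w L} {μ : ℤ} (h : ∀ m, g.proj μ m = 0) :
    (g.piece μ).FG := by
  have hbot : g.piece μ = ⊥ := by
    rw [eq_bot_iff]
    rintro _ ⟨m, rfl⟩
    exact h m
  exact hbot ▸ Submodule.fg_bot

lemma exists_proj_eq_zero (g : WeightGrading R x w L) (m : L) :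
    ∃ E : Finset ℤ, ∀ μ, μ ∉ E → g.proj μ m = 0 := by
  obtain ⟨E, hE⟩ := g.exists_sum_proj m
  refine ⟨E, fun μ hμ => ?_⟩
  have hinsert := hE _ (Finset.subset_insert μ E)
  rwa [Finset.sum_insert hμ, hE E subset_rfl, add_eq_right] at hinsert

section Exact

variable {g : WeightGrading R x w L} {g' : WeightGrading R x w L'} {g'' : WeightGrading R x w L''}
  {e f : ℤ} {φ : L →ₗ[A] L'} {ψ : L' →ₗ[A] L''}

lemma exists_proj_eq_of_exact (hφ : IsHomogeneous g g' e φ) (hex : Exact φ ψ) {μ : ℤ} {m : L'}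
    (hm : g'.proj μ m = m) (hψm : ψ m = 0) : ∃ l : L, φ (g.proj (μ - e) l) = m := by
  obtain ⟨l, rfl⟩ := (hex m).1 hψm
  exact ⟨l, by rw [hφ, sub_add_cancel, hm]⟩

lemma piece_fg_of_exact [IsNoetherianRing R] (hφ : IsHomogeneous g g' e φ)
    (hψ : IsHomogeneous g' g'' f ψ) (hex : Exact φ ψ) (μ : ℤ) (h : (g.piece (μ - e)).FG)
    (h'' : (g''.piece (μ + f)).FG) : (g'.piece μ).FG := by
  apply Submodule.fg_of_fg_map_of_fg_inf_ker (OverBase.map R ψ)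
  · refine h''.of_le ?_
    rintro _ ⟨_, ⟨m, rfl⟩, rfl⟩
    exact ⟨ψ m, (hψ μ m).symm⟩
  · refine (h.map (OverBase.map R φ)).of_le fun m hm => ?_
    obtain ⟨l, hl⟩ := exists_proj_eq_of_exact hφ hex ((g'.mem_piece_iff m).1 hm.1) hm.2
    exact ⟨_, g.proj_mem_piece _ l, hl⟩

namespace FiniteBoundedAbove

lemma of_exact [IsNoetherianRing R] (hφ : IsHomogeneous g g' e φ)
    (hψ : IsHomogeneous g' g'' f ψ) (hex : Exact φ ψ) (h : g.FiniteBoundedAbove)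
    (h'' : g''.FiniteBoundedAbove) : g'.FiniteBoundedAbove := by
  refine ⟨fun μ => piece_fg_of_exact hφ hψ hex μ (h.piece_fg _) (h''.piece_fg _), ?_⟩
  obtain ⟨B, hB⟩ := h.exists_bound
  obtain ⟨B'', hB''⟩ := h''.exists_bound
  refine ⟨max (B + e) (B'' - f), fun μ hμ m => ?_⟩
  have hψm : ψ (g'.proj μ m) = 0 := by
    rw [hψ]
    exact hB'' _ (by omega) _
  obtain ⟨l, hl⟩ := exists_proj_eq_of_exact hφ hex (g'.proj_idem μ m) hψm
  rw [← hl, hB _ (by omega), map_zero]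

lemma of_subsingleton [Subsingleton L] (g : WeightGrading R x w L) : g.FiniteBoundedAbove :=
  ⟨fun _ => piece_fg_of_proj_eq_zero fun _ => Subsingleton.elim _ _,
    0, fun _ _ _ => Subsingleton.elim _ _⟩

lemma of_surjective [IsNoetherianRing R] (hφ : IsHomogeneous g g' e φ) (hsurj : Surjective φ)
    (h : g.FiniteBoundedAbove) : g'.FiniteBoundedAbove :=
  of_exact (f := 0) hφ (.zero g' g 0) (fun m => ⟨fun _ => hsurj m, fun _ => rfl⟩) h h

lemma of_injective [IsNoetherianRing R] (hφ : IsHomogeneous g g' e φ) (hinj : Injective φ)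
    (h : g'.FiniteBoundedAbove) : g.FiniteBoundedAbove :=
  of_exact (e := 0) (.zero g' g 0) hφ (LinearMap.exact_zero_iff_injective L' φ |>.2 hinj) h h

/-- In large degrees multiplication by `x k` is injective on `L'`, which therefore vanishes there
by torsion. Descending from these degrees, `piece_fg_of_exact` compares degree `μ` with
degree `μ + w k`. -/
lemma of_exact_smul [IsNoetherianRing R] {k : Fin n} (hk : 0 < w k)
    (hφ : IsHomogeneous g g' e φ) (hex : Exact φ (x k • LinearMap.id : L' →ₗ[A] L'))
    (htors : Module.IsTorsion' L' (Submonoid.powers (x k))) (h : g.FiniteBoundedAbove) :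
    g'.FiniteBoundedAbove := by
  obtain ⟨B, hB⟩ := h.exists_bound
  have hinj : ∀ μ, B + e ≤ μ → ∀ m, g'.proj μ m = m → x k • m = 0 → m = 0 :=
    fun μ hμ m hm hxm => by
      obtain ⟨l, rfl⟩ := exists_proj_eq_of_exact hφ hex hm hxm
      rw [hB _ (by omega), map_zero]
  have hpow : ∀ N : ℕ, ∀ μ, B + e ≤ μ → ∀ m, g'.proj μ m = m → x k ^ N • m = 0 →
      m = 0 := by
    intro N
    induction N with
    | zero => exact fun μ _ m _ hm => by simpa using hm
    | succ N ih =>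
      intro μ hμ m hm hxm
      refine hinj μ hμ m hm (ih (μ + w k) (by omega) _ ?_ (by rwa [smul_smul, ← pow_succ]))
      rw [g'.proj_smul, hm]
  have hvanish : ∀ μ, B + e ≤ μ → ∀ m, g'.proj μ m = 0 := fun μ hμ m => by
    obtain ⟨N, hN⟩ := (Submodule.isTorsion'_powers_iff _).1 htors (g'.proj μ m)
    exact hpow N μ hμ _ (g'.proj_idem μ m) hN
  have hfg : ∀ t : ℕ, ∀ μ, B + e - t ≤ μ → (g'.piece μ).FG := by
    intro t
    induction t with
    | zero => exact fun μ hμ => piece_fg_of_proj_eq_zero (hvanish μ (by simpa using hμ))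
    | succ t ih =>
      exact fun μ hμ => piece_fg_of_exact hφ (g'.isHomogeneous_smul_id k) hex μ (h.piece_fg _)
        (ih _ (by push_cast at hμ; omega))
  exact ⟨fun μ => hfg (B + e - μ).toNat μ (by omega), B + e, hvanish⟩

end FiniteBoundedAbove

end Exact

section KilledByVariables

variable (hA : Surjective (algebraMap R (A ⧸ Ideal.span (Set.range x))))
include hA

lemma exists_smul_eq_algebraMap_smul (hL : ∀ j, ∀ m : L, x j • m = 0) (a : A) :
    ∃ r : R, ∀ m : L, a • m = algebraMap R A r • m := by
  obtain ⟨r, hr⟩ := hA (Ideal.Quotient.mk _ a)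
  have hann : Ideal.span (Set.range x) ≤ Module.annihilator A L := by
    rw [Ideal.span_le]
    rintro _ ⟨j, rfl⟩
    exact Module.mem_annihilator.2 (hL j)
  refine ⟨r, fun m => ?_⟩
  rw [← sub_eq_zero, ← sub_smul]
  exact Module.mem_annihilator.1 (hann (Ideal.Quotient.eq.1 hr.symm)) m

lemma exists_span_overBase_eq_top [Module.Finite A L]
    (hL : ∀ j, ∀ m : L, x j • m = 0) :
    ∃ s : Finset L, Submodule.span R (M := OverBase R A L) (s : Set L) = ⊤ := by
  obtain ⟨s, hs⟩ := Module.Finite.fg_top (R := A) (M := L)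
  refine ⟨s, eq_top_iff.2 fun (m : L) _ => ?_⟩
  have hm : m ∈ Submodule.span A (s : Set L) := hs ▸ Submodule.mem_top
  induction hm using Submodule.span_induction with
  | mem m hm => exact Submodule.subset_span hm
  | zero => exact Submodule.zero_mem _
  | add a b _ _ ha hb => exact Submodule.add_mem _ (ha trivial) (hb trivial)
  | smul a m _ hm =>
    obtain ⟨r, hr⟩ := exists_smul_eq_algebraMap_smul hA hL a
    rw [hr]
    exact Submodule.smul_mem _ r (hm trivial)

lemma finiteBoundedAbove_of_smul_eq_zero [IsNoetherianRing R] [Module.Finite A L]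
    (g : WeightGrading R x w L) (hL : ∀ j, ∀ m : L, x j • m = 0) : g.FiniteBoundedAbove := by
  classical
  obtain ⟨s, hs⟩ := exists_span_overBase_eq_top hA hL
  have htop : (⊤ : Submodule R (OverBase R A L)).FG := ⟨s, hs⟩
  refine ⟨fun μ => htop.of_le le_top, ?_⟩
  choose E hE using g.exists_proj_eq_zero
  obtain ⟨B, hB⟩ := (s.biUnion E).bddAbove
  refine ⟨B + 1, fun μ hμ m => ?_⟩
  have hm : m ∈ Submodule.span R (M := OverBase R A L) (s : Set L) := hs ▸ trivial
  induction hm using Submodule.span_induction with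
  | mem m hm =>
    refine hE m μ fun hμE => ?_
    have := hB (Finset.mem_coe.2 (Finset.mem_biUnion.2 ⟨m, hm, hμE⟩))
    omega
  | zero => exact map_zero _
  | add a b _ _ ha hb => exact (map_add _ _ _).trans (by rw [ha, hb, add_zero])
  | smul r m _ hm => exact (g.proj_algebraMap_smul μ r m).trans (by rw [hm, smul_zero])

omit hA in
lemma cechL_subsingleton_of_smul_eq_zero (hL : ∀ j, ∀ m : L, x j • m = 0)
    {T : Finset (Fin n)} (hT : T.Nonempty) : Subsingleton (cechL A x L T) := by
  refine subsingleton_of_forall_eq 0 fun c => ?_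
  obtain ⟨k, m, rfl⟩ := cechL.exists_eq_frac x T c
  obtain ⟨j, hj⟩ := hT
  refine (cechL.frac_eq_zero_iff x T k m).2 ⟨1, ?_⟩
  rw [pow_one, ← Finset.mul_prod_erase _ _ hj, mul_smul, hL]

lemma cochains_finiteBoundedAbove_of_smul_eq_zero [IsNoetherianRing R] [Module.Finite A L]
    (g : WeightGrading R x w L) (hL : ∀ j, ∀ m : L, x j • m = 0) (p : ℕ) :
    (g.cochains p).FiniteBoundedAbove := by
  cases p with
  | zero =>
    have hfrac : IsHomogeneous g (g.loc ∅) 0 (cechL.frac x ∅ 0) := fun μ m => by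
      rw [loc_proj_frac, Nat.cast_zero, zero_mul, add_zero, add_zero]
    have hsurj : Surjective (cechL.frac x ∅ 0 : L →ₗ[A] cechL A x L ∅) := fun c => by
      obtain ⟨k, m, rfl⟩ := cechL.exists_eq_frac x ∅ c
      exact ⟨m, by simpa using (cechL.pow_smul_frac x ∅ k m).symm⟩
    let T₀ : {T : Finset (Fin n) // T.card = 0} := ⟨∅, rfl⟩
    have hT : ∀ T, T = T₀ := fun T => Subtype.ext (Finset.card_eq_zero.1 T.2)
    refine .of_injective (e := 0) (φ := LinearMap.proj T₀) (fun μ c => by rw [add_zero]; rfl)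
      (fun c c' h => funext fun T => hT T ▸ h)
      (.of_surjective hfrac hsurj (g.finiteBoundedAbove_of_smul_eq_zero hA hL))
  | succ p =>
    have : ∀ T : {T : Finset (Fin n) // T.card = p + 1}, Subsingleton (cechL A x L T.1) :=
      fun T => cechL_subsingleton_of_smul_eq_zero hL (Finset.card_pos.1 (T.2.symm ▸ p.succ_pos))
    exact .of_subsingleton _

lemma lc_finiteBoundedAbove_of_smul_eq_zero [IsNoetherianRing R] [Module.Finite A L]
    (g : WeightGrading R x w L) (hL : ∀ j, ∀ m : L, x j • m = 0) (i : ℕ) :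
    (g.lc i).FiniteBoundedAbove := by
  have hcoc : (g.cocycles i).FiniteBoundedAbove :=
    .of_injective (e := 0) (φ := (cechC.cocycles x L i).subtype)
      (fun μ z => by rw [add_zero]; rfl) Subtype.val_injective
      (g.cochains_finiteBoundedAbove_of_smul_eq_zero hA hL i)
  exact .of_surjective (e := 0) (fun μ z => by rw [add_zero, lc_proj_mk])
    (lcMod.mk_surjective i) hcoc

end KilledByVariables

/-- The grading of `x k • L`. -/
abbrev smulRange (g : WeightGrading R x w L) (k : Fin n) :
    WeightGrading R x w (LinearMap.range (x k • LinearMap.id : L →ₗ[A] L)) :=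
  g.restrict _ (g.isHomogeneous_smul_id k).mem_range

/-- The grading of the `x k`-torsion of `L`. -/
abbrev smulKer (g : WeightGrading R x w L) (k : Fin n) :
    WeightGrading R x w (LinearMap.ker (x k • LinearMap.id : L →ₗ[A] L)) :=
  g.restrict _ (g.isHomogeneous_smul_id k).mem_ker

/-- The grading of `L / x k • L`. -/
abbrev quotSMul (g : WeightGrading R x w L) (k : Fin n) :
    WeightGrading R x w (L ⧸ LinearMap.range (x k • LinearMap.id : L →ₗ[A] L)) :=
  g.quotient _ (g.isHomogeneous_smul_id k).mem_range

variable [IsNoetherianRing R]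

lemma lc_finiteBoundedAbove_of_smul_injective (g : WeightGrading R x w L) {k : Fin n}
    (hk : 0 < w k) (hinj : Injective (x k • LinearMap.id : L →ₗ[A] L))
    (hquot : ∀ i, ((g.quotSMul k).lc i).FiniteBoundedAbove) (i : ℕ) :
    (g.lc i).FiniteBoundedAbove := by
  have hshort : IsShortExact (x k • LinearMap.id : L →ₗ[A] L) (Submodule.mkQ (LinearMap.range _)) :=
    ⟨hinj, Submodule.mkQ_surjective _, LinearMap.exact_map_mkQ_range _⟩
  have hmk : IsHomogeneous g (g.quotSMul k) 0 (Submodule.mkQ _) := fun μ m => by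
    rw [add_zero]
    rfl
  have hmap : lcMod.map x (x k • LinearMap.id : L →ₗ[A] L) i = x k • LinearMap.id :=
    LinearMap.ext fun h => lcMod.map_smul_id_apply (x k) i h
  cases i with
  | zero =>
    refine .of_exact_smul (e := 0) hk (.zero ((g.quotSMul k).lc 0) _ 0) ?_
      (lcMod.isTorsion'_powers k 0) (hquot 0)
    exact (LinearMap.exact_zero_iff_injective _ _).2 (hmap ▸ lcMod.map_zero_injective hinj)
  | succ i =>
    exact .of_exact_smul hk ((g.isHomogeneous_smul_id k).lcMod_δ hmk hshort i)
      (hmap ▸ lcMod.exact_δ_map hshort i) (lcMod.isTorsion'_powers k _) (hquot i)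

lemma lc_finiteBoundedAbove_of_ker_of_range (g : WeightGrading R x w L) (k : Fin n) (i : ℕ)
    (hker : ((g.smulKer k).lc i).FiniteBoundedAbove)
    (hrange : ((g.smulRange k).lc i).FiniteBoundedAbove) : (g.lc i).FiniteBoundedAbove := by
  have hsubtype : IsHomogeneous (g.smulKer k) g 0 (Submodule.subtype _) := fun μ m => by
    rw [add_zero]
    rfl
  have hsmul : IsHomogeneous g (g.smulRange k) (w k) (LinearMap.rangeRestrict _) :=
    fun μ m => Subtype.ext (g.isHomogeneous_smul_id k μ m)
  exact .of_exact (hsubtype.lcMod_map i) (hsmul.lcMod_map i)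
    (lcMod.exact_map_map (IsShortExact.ker_rangeRestrict _) i) hker hrange

/-- Induction on the set of variables which do not kill `L`: the short exact sequences
`0 → ker x_k → L → x_k L → 0` reduce to the case that `x_k` is injective, and then
`0 → L → L → L / x_k L → 0` trades `L` for a module killed by one more variable. -/
lemma lc_finiteBoundedAbove_of_smul_eq_zero_of_notMem [IsNoetherianRing A]
    (hA : Surjective (algebraMap R (A ⧸ Ideal.span (Set.range x)))) (hw : ∀ j, 0 < w j)
    (T : Finset (Fin n)) : ∀ (L : Type) [AddCommGroup L] [Module A L] [Module.Finite A L]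
      (g : WeightGrading R x w L), (∀ j ∉ T, ∀ m : L, x j • m = 0) →
      ∀ i, (g.lc i).FiniteBoundedAbove := by
  induction T using Finset.induction_on with
  | empty =>
    intro L _ _ _ g hL i
    exact g.lc_finiteBoundedAbove_of_smul_eq_zero hA (fun j => hL j (Finset.notMem_empty j)) i
  | insert k T _ ihT =>
    intro L _ _ _ g hL
    obtain ⟨N, hN⟩ : ∃ N : ℕ, ∀ m : L, x k ^ (N + 1) • m = 0 → x k ^ N • m = 0 := by
      obtain ⟨N, hN⟩ := monotone_stabilizes_iff_noetherian.2 (inferInstance : IsNoetherian A L)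
        (LinearMap.iterateKer (x k • LinearMap.id))
      refine ⟨N, fun m hm => ?_⟩
      have hle := (hN (N + 1) N.le_succ).ge
      simpa [smul_pow, LinearMap.iterateKer, ← Module.End.one_eq_id] using
        @hle m (by simpa [smul_pow, LinearMap.iterateKer, ← Module.End.one_eq_id] using hm)
    have hmem : ∀ j ∉ T, j ≠ k → j ∉ insert k T := fun j hj hjk => by simp [hj, hjk]
    induction N generalizing L with
    | zero =>
      refine g.lc_finiteBoundedAbove_of_smul_injective (hw k)
        ((injective_iff_map_eq_zero _).2 fun m hm => by simpa using hN m (by simpa using hm))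
        (ihT _ _ fun j hj => (Submodule.mkQ_surjective _).forall.2 fun m => ?_)
      rw [← map_smul]
      obtain rfl | hjk := eq_or_ne j k
      · exact (Submodule.Quotient.mk_eq_zero _).2 ⟨m, rfl⟩
      · rw [hL j (hmem j hj hjk), map_zero]
    | succ N ihN =>
      refine fun i => g.lc_finiteBoundedAbove_of_ker_of_range k i
        (ihT _ _ (fun j hj m => ?_) i)
        (ihN _ _ (fun j hj m => Subtype.ext (hL j hj m)) (fun m hm => ?_) i)
      · obtain rfl | hjk := eq_or_ne j k
        · exact Subtype.ext m.2
        · exact Subtype.ext (hL j (hmem j hj hjk) m)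
      · obtain ⟨_, l, rfl⟩ := m
        refine Subtype.ext ?_
        have hl := hN l ((pow_succ (x k) (N + 1) ▸ mul_smul _ _ l).trans (congrArg Subtype.val hm))
        rwa [pow_succ, mul_smul] at hl

theorem lc_finiteBoundedAbove [IsNoetherianRing A] [Module.Finite A L]
    (hA : Surjective (algebraMap R (A ⧸ Ideal.span (Set.range x)))) (hw : ∀ j, 0 < w j)
    (g : WeightGrading R x w L) (i : ℕ) : (g.lc i).FiniteBoundedAbove :=
  lc_finiteBoundedAbove_of_smul_eq_zero_of_notMem hA hw Finset.univ L g
    (fun j hj => absurd (Finset.mem_univ j) hj) i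

end WeightGrading

end Finiteness

noncomputable section Support

open Function Module
open scoped TensorProduct

section Annihilator

variable {A : Type} [CommRing A] {L : Type} [AddCommGroup L] [Module A L]

lemma exists_linearMap_residueField_ne_zero [Module.Finite A L] (P : PrimeSpectrum A)
    (hP : annihilator A L ≤ P.asIdeal) : ∃ φ : L →ₗ[A] P.asIdeal.ResidueField, φ ≠ 0 := by
  have : Nontrivial (P.asIdeal.ResidueField ⊗[A] L) :=
    (mem_support_iff_nontrivial_residueField_tensorProduct P).1 (mem_support_iff_of_finite.2 hP)
  obtain ⟨f, hf⟩ := exists_ne (0 : Dual P.asIdeal.ResidueField (P.asIdeal.ResidueField ⊗[A] L))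
  refine ⟨f.restrictScalars A ∘ₗ TensorProduct.mk A P.asIdeal.ResidueField L 1, fun h => hf ?_⟩
  ext m
  exact LinearMap.congr_fun h m

/-- Clear the denominators of a nonzero map to the fraction field of `A / P`. -/
lemma exists_linearMap_quotient_ne_zero [Module.Finite A L] (P : PrimeSpectrum A)
    (hP : annihilator A L ≤ P.asIdeal) : ∃ φ : L →ₗ[A] A ⧸ P.asIdeal, φ ≠ 0 := by
  classical
  let ι : A ⧸ P.asIdeal →ₗ[A] P.asIdeal.ResidueField :=
    (IsScalarTower.toAlgHom A (A ⧸ P.asIdeal) P.asIdeal.ResidueField).toLinearMap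
  have hι : Injective ι := P.asIdeal.injective_algebraMap_quotient_residueField
  obtain ⟨f, hf⟩ := exists_linearMap_residueField_ne_zero P hP
  obtain ⟨s, hs⟩ := Module.Finite.fg_top (R := A) (M := L)
  obtain ⟨⟨b, hb⟩, hbs⟩ :=
    IsLocalization.exist_integer_multiples (nonZeroDivisors (A ⧸ P.asIdeal)) s f
  obtain ⟨a, rfl⟩ := Ideal.Quotient.mk_surjective b
  have hrange : ∀ m, (a • f) m ∈ LinearMap.range ι := by
    have hle : Submodule.span A (s : Set L) ≤ (LinearMap.range ι).comap (a • f) :=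
      Submodule.span_le.2 fun m hm => by
        obtain ⟨c, hc⟩ := hbs m hm
        exact ⟨c, hc.trans (algebraMap_smul (A ⧸ P.asIdeal) a (f m))⟩
    exact fun m => hle (hs ▸ Submodule.mem_top)
  refine ⟨(LinearEquiv.ofInjective ι hι).symm ∘ₗ (a • f).codRestrict _ hrange, fun h => hf ?_⟩
  ext m
  have hm : a • f m = 0 :=
    Subtype.ext_iff.1 ((LinearEquiv.map_eq_zero_iff (LinearEquiv.ofInjective ι hι).symm).1
      (LinearMap.congr_fun h m))
  rw [← algebraMap_smul (A ⧸ P.asIdeal) a, Algebra.smul_def] at hm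
  exact (mul_eq_zero.1 hm).resolve_left
    ((map_ne_zero_iff _ hι).2 (nonZeroDivisors.ne_zero hb))

lemma lt_annihilator_quotient {P : Ideal A} {I : Submodule A (A ⧸ P)} (hI : I ≠ ⊥) :
    P < annihilator A ((A ⧸ P) ⧸ I) := by
  refine lt_of_le_of_ne ?_ fun h => hI ?_
  · exact (Ideal.annihilator_quotient (I := P)).ge.trans
      (I.mkQ.annihilator_le_of_surjective I.mkQ_surjective)
  · refine (Submodule.eq_bot_iff I).2 fun q hq => ?_
    obtain ⟨a, rfl⟩ := Ideal.Quotient.mk_surjective q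
    refine Ideal.Quotient.eq_zero_iff_mem.2 (h ▸ mem_annihilator.2 fun m => ?_)
    obtain ⟨q, rfl⟩ := I.mkQ_surjective m
    obtain ⟨c, rfl⟩ := Ideal.Quotient.mk_surjective q
    have hac : a • Ideal.Quotient.mk P c = c • Ideal.Quotient.mk P a := by
      simp only [Algebra.smul_def, Ideal.Quotient.algebraMap_eq, mul_comm]
    exact (Submodule.Quotient.mk_eq_zero I).2 (by simpa only [hac] using I.smul_mem c hq)

end Annihilator

namespace lcMod

variable {A : Type} [CommRing A] {n : ℕ} {x : Fin n → A}
variable {L L' L'' : Type} [AddCommGroup L] [Module A L] [AddCommGroup L'] [Module A L']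
  [AddCommGroup L''] [Module A L'']
variable {φ : L →ₗ[A] L'} {ψ : L' →ₗ[A] L''} {i : ℕ}

lemma subsingleton_middle (h : IsShortExact φ ψ) (hL : Subsingleton (lcMod A x L i))
    (hL'' : Subsingleton (lcMod A x L'' i)) : Subsingleton (lcMod A x L' i) :=
  subsingleton_of_forall_eq 0 fun c => by
    obtain ⟨b, rfl⟩ := (exact_map_map h i c).1 (Subsingleton.elim _ _)
    rw [Subsingleton.elim b 0, map_zero]

lemma subsingleton_right (h : IsShortExact φ ψ) (hL' : Subsingleton (lcMod A x L' i))
    (hL : Subsingleton (lcMod A x L (i + 1))) : Subsingleton (lcMod A x L'' i) :=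
  subsingleton_of_forall_eq 0 fun c => by
    obtain ⟨b, rfl⟩ := (exact_map_δ h i c).1 (Subsingleton.elim _ _)
    rw [Subsingleton.elim b 0, map_zero]

lemma subsingleton_of_equiv (e : L ≃ₗ[A] L') (i : ℕ) (hL : Subsingleton (lcMod A x L i)) :
    Subsingleton (lcMod A x L' i) :=
  subsingleton_of_forall_eq 0 fun c => by
    rw [← map_id_apply i c, ← e.comp_symm, map_comp_apply]
    exact (congrArg _ (Subsingleton.elim _ _)).trans (map_zero _)

lemma subsingleton_of_subsingleton [Subsingleton L] (i : ℕ) : Subsingleton (lcMod A x L i) :=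
  subsingleton_of_forall_eq 0 fun c => by
    rw [← map_id_apply i c, Subsingleton.elim LinearMap.id ((0 : A) • LinearMap.id),
      map_smul_id_apply, zero_smul]

end lcMod

variable {A : Type} [CommRing A] {n : ℕ} {x : Fin n → A}

/-- The image of a nonzero map `V → A / P` is a quotient of `V`, and its cokernel is killed by an
ideal larger than `P`. -/
lemma lcMod.subsingleton_quotient_of_linearMap {V : Type} [AddCommGroup V]
    [Module A V] {P : Ideal A} {φ : V →ₗ[A] A ⧸ P} (hφ : φ ≠ 0) {j : ℕ}
    (hV : Subsingleton (lcMod A x V j))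
    (hker : Subsingleton (lcMod A x (LinearMap.ker φ) (j + 1)))
    (hP : ∀ (L : Type) [AddCommGroup L] [Module A L] [Module.Finite A L],
      P < annihilator A L → Subsingleton (lcMod A x L j)) :
    Subsingleton (lcMod A x (A ⧸ P) j) :=
  subsingleton_middle (IsShortExact.subtype_mkQ (LinearMap.range φ))
    (subsingleton_right (IsShortExact.ker_rangeRestrict φ) hV hker)
    (hP _ (lt_annihilator_quotient (LinearMap.range_eq_bot.not.2 hφ)))

section

variable [IsNoetherianRing A] {V : Type} [AddCommGroup V] [Module A V] [Module.Finite A V]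
  {J₀ : Ideal A}

lemma lcMod.subsingleton_of_le_annihilator_step (hV : J₀ ≤ annihilator A V)
    (hhom : ∀ P : PrimeSpectrum A, J₀ ≤ P.asIdeal → ∃ φ : V →ₗ[A] A ⧸ P.asIdeal, φ ≠ 0) (j : ℕ)
    (hVj : Subsingleton (lcMod A x V j))
    (ih : ∀ (L : Type) [AddCommGroup L] [Module A L] [Module.Finite A L],
      J₀ ≤ annihilator A L → Subsingleton (lcMod A x L (j + 1)))
    (J : Ideal A) (hJ : J₀ ≤ J) (L : Type) [AddCommGroup L] [Module A L] [Module.Finite A L]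
    (hL : J ≤ annihilator A L) : Subsingleton (lcMod A x L j) := by
  induction J using IsNoetherian.induction generalizing L with
  | hgt J ihJ =>
    have hprime : ∀ P : PrimeSpectrum A, J ≤ P.asIdeal →
        Subsingleton (lcMod A x (A ⧸ P.asIdeal) j) := by
      intro P hJP
      obtain ⟨φ, hφ⟩ := hhom P (hJ.trans hJP)
      refine subsingleton_quotient_of_linearMap hφ hVj (ih _ (hV.trans ?_)) fun L _ _ _ hPL =>
        ihJ (annihilator A L) (hJP.trans_lt hPL) (hJ.trans (hJP.trans hPL.le)) L le_rfl
      exact (LinearMap.ker φ).subtype.annihilator_le_of_injective Subtype.val_injective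
    refine IsNoetherianRing.induction_on_isQuotientEquivQuotientPrime A ‹_›
      (motive := fun L _ _ _ => J ≤ annihilator A L → Subsingleton (lcMod A x L j))
      (fun L _ _ _ _ _ => subsingleton_of_subsingleton j) ?_ ?_ hL
    · intro L _ _ _ P e hL
      refine subsingleton_of_equiv e.symm j (hprime P ?_)
      rwa [e.annihilator_eq, Ideal.annihilator_quotient] at hL
    · intro L₁ _ _ _ L₂ _ _ _ L₃ _ _ _ f g hf hg hfg h₁ h₃ hL
      exact subsingleton_middle ⟨hf, hg, hfg⟩ (h₁ (hL.trans (f.annihilator_le_of_injective hf)))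
        (h₃ (hL.trans (g.annihilator_le_of_surjective hg)))

theorem lcMod.subsingleton_of_le_annihilator (hV : J₀ ≤ annihilator A V)
    (hhom : ∀ P : PrimeSpectrum A, J₀ ≤ P.asIdeal → ∃ φ : V →ₗ[A] A ⧸ P.asIdeal, φ ≠ 0) {d : ℕ}
    (hd : ∀ j, d < j → Subsingleton (lcMod A x V j)) {j : ℕ} (hj : d < j)
    (L : Type) [AddCommGroup L] [Module A L] [Module.Finite A L]
    (hL : J₀ ≤ annihilator A L) : Subsingleton (lcMod A x L j) := by
  induction hk : n + 1 - j generalizing j L with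
  | zero => exact subsingleton_of_lt (by omega)
  | succ k ih =>
    exact subsingleton_of_le_annihilator_step hV hhom j (hd j hj)
      (fun L _ _ _ hL => ih (by omega) L hL (by omega)) J₀ le_rfl L hL

end

section TensorProduct

variable {R : Type} [CommRing R] [Algebra R A] {M N : Type} [AddCommGroup M] [Module A M]
  [Module R M] [IsScalarTower R A M] [AddCommGroup N] [Module R N]

lemma finite_tensorProduct [Module.Finite A M] [Module.Finite R N] : Module.Finite A (M ⊗[R] N) :=
  Module.Finite.equiv (TensorProduct.AlgebraTensorModule.cancelBaseChange R A A M N)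

lemma annihilator_le_annihilator_tensorProduct :
    annihilator A M ≤ annihilator A (M ⊗[R] N) := fun a ha =>
  mem_annihilator.2 fun t => by
    induction t with
    | zero => rw [smul_zero]
    | add t t' ht ht' => rw [smul_add, ht, ht', add_zero]
    | tmul m c => rw [TensorProduct.smul_tmul', mem_annihilator.1 ha, TensorProduct.zero_tmul]

lemma map_annihilator_le_annihilator_tensorProduct :
    (annihilator R N).map (algebraMap R A) ≤ annihilator A (M ⊗[R] N) :=
  Ideal.map_le_iff_le_comap.2 fun r hr => mem_annihilator.2 fun t => by
    induction t with
    | zero => rw [smul_zero]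
    | add t t' ht ht' => rw [smul_add, ht, ht', add_zero]
    | tmul m c =>
      rw [algebraMap_smul, ← TensorProduct.tmul_smul, mem_annihilator.1 hr, TensorProduct.tmul_zero]

lemma exists_linearMap_tensorProduct_quotient_ne_zero [Module.Finite A M] [Module.Finite R N]
    (P : PrimeSpectrum A) (hM : annihilator A M ≤ P.asIdeal)
    (hN : (annihilator R N).map (algebraMap R A) ≤ P.asIdeal) :
    ∃ φ : M ⊗[R] N →ₗ[A] A ⧸ P.asIdeal, φ ≠ 0 := by
  obtain ⟨f, hf⟩ := exists_linearMap_quotient_ne_zero P hM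
  obtain ⟨g, hg⟩ := exists_linearMap_quotient_ne_zero (P.comap (algebraMap R A))
    (Ideal.map_le_iff_le_comap.1 hN)
  obtain ⟨m, hm⟩ := DFunLike.exists_ne hf
  obtain ⟨c, hc⟩ := DFunLike.exists_ne hg
  let ι : R ⧸ (P.comap (algebraMap R A)).asIdeal →ₗ[R] A ⧸ P.asIdeal :=
    (Ideal.quotientMapₐ P.asIdeal (Algebra.ofId R A) le_rfl).toLinearMap
  have hι : Injective ι := Ideal.quotientMap_injective
  let φ : M ⊗[R] N →ₗ[A] A ⧸ P.asIdeal := TensorProduct.AlgebraTensorModule.lift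
    { toFun m := LinearMap.mulLeft R (f m) ∘ₗ ι ∘ₗ g
      map_add' m m' := by ext; simp [add_mul]
      map_smul' a m := by ext; simp }
  refine ⟨φ, fun h => mul_ne_zero hm ((map_ne_zero_iff ι hι).2 hc) ?_⟩
  exact LinearMap.congr_fun h (m ⊗ₜ c)

theorem lcMod.subsingleton_of_tensorProduct [IsNoetherianRing A] [Module.Finite A M]
    [Module.Finite R N] {d : ℕ} (hd : ∀ j, d < j → Subsingleton (lcMod A x (M ⊗[R] N) j))
    {j : ℕ} (hj : d < j) (L : Type) [AddCommGroup L] [Module A L] [Module.Finite A L]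
    (hM : annihilator A M ≤ annihilator A L)
    (hN : (annihilator R N).map (algebraMap R A) ≤ annihilator A L) :
    Subsingleton (lcMod A x L j) :=
  have : Module.Finite A (M ⊗[R] N) := finite_tensorProduct
  subsingleton_of_le_annihilator
    (sup_le annihilator_le_annihilator_tensorProduct map_annihilator_le_annihilator_tensorProduct)
    (fun P hP => exists_linearMap_tensorProduct_quotient_ne_zero P (le_sup_left.trans hP)
      (le_sup_right.trans hP)) hd hj L (sup_le hM hN)

end TensorProduct

end Support

noncomputable section OneAddTorsion

open Function Module

variable {R : Type} [CommRing R] {A : Type} [CommRing A] [Algebra R A] {n : ℕ} {x : Fin n → A}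
  {w : Fin n → ℤ}
variable {L L' : Type} [AddCommGroup L] [Module A L] [AddCommGroup L'] [Module A L']

/-- Every element of `L` is killed by an element of `1 + I`, that is, the localization of `L` at
the multiplicative set `1 + I` vanishes. -/
def IsOneAddTorsion (I : Ideal R) (A : Type) [CommRing A] [Algebra R A] (L : Type)
    [AddCommGroup L] [Module A L] : Prop :=
  ∀ m : L, ∃ a ∈ I, (1 + algebraMap R A a) • m = 0

/-- Nakayama's lemma, applied to each graded piece. -/
lemma WeightGrading.isOneAddTorsion (g : WeightGrading R x w L) (hfg : ∀ μ, (g.piece μ).FG)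
    {I : Ideal R}
    (hI : ∀ m : L, ∃ b ∈ I,
      (1 + algebraMap R A b) • m ∈ (I • ⊤ : Submodule R (OverBase R A L))) :
    IsOneAddTorsion I A L := by
  have htop : (⊤ : Submodule R (OverBase R A L)) ≤ I • ⊤ := fun (m : L) _ => by
    obtain ⟨b, hb, hbm⟩ := hI m
    have hm : (1 + algebraMap R A b) • m - algebraMap R A b • m = m := by
      rw [add_smul, one_smul, add_sub_cancel_right]
    exact hm ▸ Submodule.sub_mem _ hbm
      (Submodule.smul_mem_smul (N := (⊤ : Submodule R (OverBase R A L))) hb trivial)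
  have hpiece : ∀ μ, ∃ r : R, r - 1 ∈ I ∧ ∀ m ∈ g.piece μ, r • m = 0 := fun μ => by
    refine Submodule.exists_sub_one_mem_and_smul_eq_zero_of_fg_of_le_smul I _ (hfg μ) ?_
    rw [piece, LinearMap.range_eq_map, ← Submodule.map_smul'']
    exact Submodule.map_mono htop
  choose r hrI hr using hpiece
  intro m
  obtain ⟨E, hE⟩ := g.exists_sum_proj m
  refine ⟨∏ μ ∈ E, r μ - 1, ?_, ?_⟩
  · rw [← Ideal.Quotient.eq, map_prod, map_one]
    exact Finset.prod_eq_one fun μ _ => Ideal.Quotient.eq.2 (hrI μ)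
  · rw [map_sub, map_one, add_sub_cancel, ← hE E subset_rfl, Finset.smul_sum]
    refine Finset.sum_eq_zero fun μ hμ => ?_
    rw [← Finset.prod_erase_mul _ _ hμ, map_mul, mul_smul]
    exact (congrArg _ (hr μ _ (g.proj_mem_piece μ m))).trans
      (smul_zero (A := L) _)

/-- The map `l ↦ ∑ k, a k • l k` from a power of `L` to `L`, whose image is `I • L` if the `a k`
generate `I`. -/
def sumSMul (L : Type) [AddCommGroup L] [Module A L] {r : ℕ} (a : Fin r → R) :
    (Fin r → L) →ₗ[A] L :=
  ∑ k, algebraMap R A (a k) • LinearMap.proj k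

section sumSMul

variable {r : ℕ} (a : Fin r → R)

lemma sumSMul_apply (l : Fin r → L) :
    sumSMul (A := A) L a l = ∑ k, algebraMap R A (a k) • l k := by
  simp [sumSMul]

lemma WeightGrading.isHomogeneous_sumSMul (g : WeightGrading R x w L) :
    IsHomogeneous (.pi fun _ => g) g 0 (sumSMul L a) := fun μ l => by
  rw [sumSMul_apply, sumSMul_apply, add_zero, map_sum]
  exact Finset.sum_congr rfl fun k _ => (g.proj_algebraMap_smul μ (a k) (l k)).symm

lemma span_map_le_annihilator_quotient_range_sumSMul :
    (Ideal.span (Set.range a)).map (algebraMap R A) ≤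
      annihilator A (L ⧸ LinearMap.range (sumSMul (A := A) L a)) := by
  rw [Ideal.map_span, Ideal.span_le]
  rintro _ ⟨_, ⟨k, rfl⟩, rfl⟩
  refine mem_annihilator.2 (Submodule.mkQ_surjective _ |>.forall.2 fun m => ?_)
  refine (Submodule.Quotient.mk_eq_zero _).2 ⟨Pi.single k m, ?_⟩
  rw [sumSMul_apply, Finset.sum_eq_single k (fun j _ hj => by simp [hj]) (by simp),
    Pi.single_eq_same]

lemma lcMod.map_sumSMul (j : ℕ) (v : lcMod A x (Fin r → L) j) :
    lcMod.map x (sumSMul L a) j v =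
      ∑ k, algebraMap R A (a k) • lcMod.map x (LinearMap.proj k : (Fin r → L) →ₗ[A] L) j v := by
  rw [sumSMul, lcMod.map_sum, LinearMap.sum_apply]
  exact Finset.sum_congr rfl fun k _ => LinearMap.congr_fun (lcMod.map_smul _ _ j) v

lemma lcMod.map_sumSMul_mem {I : Ideal R} (ha : ∀ k, a k ∈ I) {j : ℕ}
    (v : lcMod A x (Fin r → L) j) :
    lcMod.map x (sumSMul L a) j v ∈ (I • ⊤ : Submodule R (OverBase R A (lcMod A x L j))) := by
  rw [lcMod.map_sumSMul]
  exact Submodule.sum_mem _ fun k _ => Submodule.smul_mem_smul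
    (N := (⊤ : Submodule R (OverBase R A (lcMod A x L j)))) (ha k) trivial

end sumSMul

lemma lcMod.exists_map_rangeRestrict_eq_one_add_smul {I : Ideal R} {φ : L →ₗ[A] L'} {j : ℕ}
    (hker : IsOneAddTorsion I A (lcMod A x (LinearMap.ker φ) (j + 1)))
    (u : lcMod A x (LinearMap.range φ) j) :
    ∃ b ∈ I, ∃ v, lcMod.map x φ.rangeRestrict j v = (1 + algebraMap R A b) • u := by
  obtain ⟨b, hb, hbu⟩ := hker (δ (IsShortExact.ker_rangeRestrict φ) j u)
  rw [← map_smul] at hbu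
  exact ⟨b, hb, (exact_map_δ (IsShortExact.ker_rangeRestrict φ) j _).1 hbu⟩

lemma lcMod.map_subtype_range_map_rangeRestrict (φ : L →ₗ[A] L') {j : ℕ} (v : lcMod A x L j) :
    lcMod.map x (LinearMap.range φ).subtype j (lcMod.map x φ.rangeRestrict j v) =
      lcMod.map x φ j v := by
  rw [← map_comp_apply, φ.subtype_comp_codRestrict]

lemma lcMod.exists_map_eq_one_add_smul {I : Ideal R} {φ : L →ₗ[A] L'} {j : ℕ}
    (hker : IsOneAddTorsion I A (lcMod A x (LinearMap.ker φ) (j + 1)))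
    (hcoker : Subsingleton (lcMod A x (L' ⧸ LinearMap.range φ) j)) (h : lcMod A x L' j) :
    ∃ b ∈ I, ∃ v, lcMod.map x φ j v = (1 + algebraMap R A b) • h := by
  obtain ⟨u, rfl⟩ := (exact_map_map (IsShortExact.subtype_mkQ (LinearMap.range φ)) j h).1
    (Subsingleton.elim _ _)
  obtain ⟨b, hb, v, hv⟩ := exists_map_rangeRestrict_eq_one_add_smul hker u
  exact ⟨b, hb, v, by rw [← map_smul, ← hv, map_subtype_range_map_rangeRestrict]⟩

section

variable [IsNoetherianRing R] [IsNoetherianRing A] {I : Ideal R} {J : Ideal A}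

theorem WeightGrading.isOneAddTorsion_lc
    (hA : Surjective (algebraMap R (A ⧸ Ideal.span (Set.range x)))) (hw : ∀ j, 0 < w j) {d : ℕ}
    (hd : ∀ j, d < j → ∀ (L : Type) [AddCommGroup L] [Module A L] [Module.Finite A L],
      J ≤ annihilator A L → I.map (algebraMap R A) ≤ annihilator A L →
      Subsingleton (lcMod A x L j))
    {j : ℕ} (hj : d < j) (L : Type) [AddCommGroup L] [Module A L] [Module.Finite A L]
    (hL : J ≤ annihilator A L) (g : WeightGrading R x w L) :
    IsOneAddTorsion I A (lcMod A x L j) := by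
  obtain ⟨r, a, rfl⟩ := Submodule.fg_iff_exists_fin_generating_family.1 (IsNoetherian.noetherian I)
  induction hk : n + 1 - j generalizing j L with
  | zero =>
    have := lcMod.subsingleton_of_lt (A := A) (x := x) (L := L) (i := j) (by omega)
    exact fun h => ⟨0, zero_mem _, Subsingleton.elim _ _⟩
  | succ k ih =>
    refine (g.lc j).isOneAddTorsion (g.lc_finiteBoundedAbove hA hw j).piece_fg fun h => ?_
    have hpow : J ≤ annihilator A (Fin r → L) := fun c hc =>
      mem_annihilator.2 fun l => funext fun k => mem_annihilator.1 (hL hc) (l k)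
    have hker := ih (j := j + 1) (by omega) (LinearMap.ker (sumSMul (A := A) L a))
      (hpow.trans ((LinearMap.ker _).subtype.annihilator_le_of_injective Subtype.val_injective))
      (.restrict _ _ (g.isHomogeneous_sumSMul a).mem_ker) (by omega)
    have hcoker := hd j hj _
      (hL.trans ((LinearMap.range (sumSMul (A := A) L a)).mkQ.annihilator_le_of_surjective
        (Submodule.mkQ_surjective _)))
      (span_map_le_annihilator_quotient_range_sumSMul a)
    obtain ⟨b, hb, v, hv⟩ := lcMod.exists_map_eq_one_add_smul hker hcoker h
    have ha (k) : a k ∈ Ideal.span (Set.range a) := Ideal.subset_span (Set.mem_range_self k)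
    exact ⟨b, hb, hv ▸ lcMod.map_sumSMul_mem a ha v⟩

end

end OneAddTorsion

noncomputable section OneAddTorsionConsequences

open Function Module

variable {R : Type} [CommRing R] {A : Type} [CommRing A] [Algebra R A] {n : ℕ} {x : Fin n → A}
variable {L L' L'' : Type} [AddCommGroup L] [Module A L] [AddCommGroup L'] [Module A L']
  [AddCommGroup L''] [Module A L'']

namespace IsOneAddTorsion

variable {I : Ideal R}

lemma of_injective (h : IsOneAddTorsion I A L') (φ : L →ₗ[A] L') (hφ : Injective φ) :
    IsOneAddTorsion I A L := fun m => by
  obtain ⟨a, ha, ham⟩ := h (φ m)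
  exact ⟨a, ha, hφ (by rw [map_smul, ham, map_zero])⟩

lemma of_surjective (h : IsOneAddTorsion I A L) (φ : L →ₗ[A] L') (hφ : Surjective φ) :
    IsOneAddTorsion I A L' := hφ.forall.2 fun m => by
  obtain ⟨a, ha, ham⟩ := h m
  exact ⟨a, ha, by rw [← map_smul, ham, map_zero]⟩

lemma eq_zero_of_forall_smul_eq_zero (h : IsOneAddTorsion I A L) {m : L}
    (hm : ∀ a ∈ I, algebraMap R A a • m = 0) : m = 0 := by
  obtain ⟨a, ha, ham⟩ := h m
  rwa [add_smul, one_smul, hm a ha, add_zero] at ham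

lemma subsingleton (h : IsOneAddTorsion I A L)
    (hI : I.map (algebraMap R A) ≤ annihilator A L) : Subsingleton L :=
  subsingleton_of_forall_eq 0 fun _ => h.eq_zero_of_forall_smul_eq_zero fun _ ha =>
    mem_annihilator.1 (hI (Ideal.mem_map_of_mem _ ha)) _

lemma tensorProduct [Module R L] [IsScalarTower R A L] (h : IsOneAddTorsion I A L) (E : Type)
    [AddCommGroup E] [Module R E] : IsOneAddTorsion I A (TensorProduct R L E) := fun t => by
  induction t with
  | zero => exact ⟨0, I.zero_mem, smul_zero _⟩
  | tmul m e =>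
    obtain ⟨a, ha, ham⟩ := h m
    exact ⟨a, ha, by rw [TensorProduct.smul_tmul', ham, TensorProduct.zero_tmul]⟩
  | add t t' ht ht' =>
    obtain ⟨a, ha, hat⟩ := ht
    obtain ⟨b, hb, hbt⟩ := ht'
    refine ⟨a + b + a * b, I.add_mem (I.add_mem ha hb) (I.mul_mem_right _ ha), ?_⟩
    have hmul : 1 + algebraMap R A (a + b + a * b) =
        (1 + algebraMap R A a) * (1 + algebraMap R A b) := by
      simp only [map_add, map_mul]
      ring
    rw [hmul, smul_add, mul_smul, mul_smul, hbt, smul_zero, add_zero, smul_comm, hat, smul_zero]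

end IsOneAddTorsion

namespace lcMod

variable {I : Ideal R} {φ : L →ₗ[A] L'} {ψ : L' →ₗ[A] L''} {i : ℕ}

lemma annihilator_le (i : ℕ) : annihilator A L ≤ annihilator A (lcMod A x L i) := fun a ha =>
  mem_annihilator.2 fun h => by
    have hzero : a • (LinearMap.id : L →ₗ[A] L) = (0 : A) • LinearMap.id := by
      ext m
      simp [mem_annihilator.1 ha]
    rw [← map_smul_id_apply, hzero, map_smul_id_apply, zero_smul]

lemma map_surjective (hφ : Surjective φ) (hI : I.map (algebraMap R A) ≤ annihilator A L')
    (hker : IsOneAddTorsion I A (lcMod A x (LinearMap.ker φ) (i + 1))) :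
    Surjective (map x φ i) := fun h => by
  have hse : IsShortExact (LinearMap.ker φ).subtype φ := .subtype_ker hφ
  refine (exact_map_δ hse i h).1 (hker.eq_zero_of_forall_smul_eq_zero fun a ha => ?_)
  rw [← map_smul, mem_annihilator.1 (annihilator_le i (hI (Ideal.mem_map_of_mem _ ha))), map_zero]

lemma exact_map_map_of_isOneAddTorsion (hexact : Exact φ ψ) (hψ : Surjective ψ)
    (hI : ∀ a ∈ I, ∃ s : L' →ₗ[A] L, φ ∘ₗ s = algebraMap R A a • LinearMap.id)
    (hker : IsOneAddTorsion I A (lcMod A x (LinearMap.ker φ) (i + 1))) :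
    Exact (map x φ i) (map x ψ i) := fun h => by
  have hse : IsShortExact (LinearMap.range φ).subtype ψ :=
    ⟨Subtype.val_injective, hψ, fun y => (hexact y).trans (by simp)⟩
  refine ⟨fun hh => ?_, ?_⟩
  · obtain ⟨u, rfl⟩ := (exact_map_map hse i h).1 hh
    obtain ⟨a, ha, v, hv⟩ := exists_map_rangeRestrict_eq_one_add_smul hker u
    obtain ⟨s, hs⟩ := hI a ha
    refine ⟨v - map x s i (map x (LinearMap.range φ).subtype i u), ?_⟩
    rw [map_sub, ← map_subtype_range_map_rangeRestrict, hv, ← map_comp_apply, hs,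
      map_smul_id_apply, map_smul, add_smul, one_smul, add_sub_cancel_right]
  · rintro ⟨v, rfl⟩
    rw [← map_comp_apply, hexact.linearMap_comp_eq_zero, ← zero_smul A 0, lcMod.map_smul, zero_smul,
      LinearMap.zero_apply]

end lcMod

end OneAddTorsionConsequences

noncomputable section TensorGrading

open TensorProduct.AlgebraTensorModule (lTensor)
open scoped TensorProduct

variable {R : Type} [CommRing R] {A : Type} [CommRing A] [Algebra R A] {n : ℕ} {x : Fin n → A}
  {w : Fin n → ℤ}
variable {M : Type} [AddCommGroup M] [Module R M] [Module A M] [IsScalarTower R A M]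
variable {E E' : Type} [AddCommGroup E] [Module R E] [AddCommGroup E'] [Module R E']

namespace WeightGrading

/-- The grading of `M ⊗ E` in which `E` has degree `0`. -/
def tensorProduct (g : WeightGrading R x w M) (E : Type) [AddCommGroup E] [Module R E] :
    WeightGrading R x w (M ⊗[R] E) :=
  let p (μ : ℤ) : M →ₗ[R] M :=
    { toFun := g.proj μ
      map_add' := (g.proj μ).map_add
      map_smul' r m := by
        simp only [← algebraMap_smul A r, g.proj_algebraMap_smul, RingHom.id_apply] }
  { proj μ := (LinearMap.rTensor E (p μ)).toAddMonoidHom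
    proj_algebraMap_smul μ r t := by
      rw [algebraMap_smul, algebraMap_smul]
      exact (LinearMap.rTensor E (p μ)).map_smul r t
    proj_proj μ ν t := by
      induction t with
      | zero => simp
      | tmul m e =>
        refine (congrArg (· ⊗ₜ[R] e) (g.proj_proj μ ν m)).trans ?_
        split_ifs
        · rfl
        · exact TensorProduct.zero_tmul _ _
      | add t t' ht ht' =>
        rw [map_add, map_add, ht, ht']
        split_ifs
        · rfl
        · exact add_zero _
    proj_smul μ j t := by
      induction t with
      | zero => simp
      | tmul m e => exact congrArg (· ⊗ₜ[R] e) (g.proj_smul μ j m)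
      | add t t' ht ht' => rw [smul_add, map_add, map_add, smul_add, ht, ht']
    exists_sum_proj t := by
      induction t with
      | zero => exact ⟨∅, by simp⟩
      | tmul m e =>
        obtain ⟨S, hS⟩ := g.exists_sum_proj m
        exact ⟨S, fun S' h => (TensorProduct.sum_tmul _ _ _).symm.trans
          (congrArg (· ⊗ₜ[R] e) (hS S' h))⟩
      | add t t' ht ht' =>
        obtain ⟨S, hS⟩ := ht
        obtain ⟨T, hT⟩ := ht'
        refine ⟨S ∪ T, fun S' h => ?_⟩
        simp only [map_add, Finset.sum_add_distrib]
        rw [hS S' (Finset.union_subset_left h), hT S' (Finset.union_subset_right h)] }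

lemma isHomogeneous_lTensor (g : WeightGrading R x w M) (φ : E →ₗ[R] E') :
    IsHomogeneous (g.tensorProduct E) (g.tensorProduct E') 0 (lTensor A M φ) := fun μ t => by
  rw [add_zero]
  induction t with
  | zero => simp
  | tmul m e => rfl
  | add t t' ht ht' => simp only [map_add, ht, ht']

end WeightGrading

end TensorGrading

noncomputable section Resolutions

open Function Module
open TensorProduct.AlgebraTensorModule (lTensor lTensor_comp lTensor_id)
open scoped TensorProduct

variable {R : Type} [CommRing R]

section Homotopy

variable {E E' E'' : Type} [AddCommGroup E] [Module R E] [AddCommGroup E'] [Module R E']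
  [AddCommGroup E''] [Module R E'']

lemma exists_comp_eq_of_exact [Projective R E] {α : E' →ₗ[R] E''} {N : Type} [AddCommGroup N]
    [Module R N] {β : E'' →ₗ[R] N} (h : Exact α β) {f : E →ₗ[R] E''} (hf : β ∘ₗ f = 0) :
    ∃ s : E →ₗ[R] E', α ∘ₗ s = f := by
  have hrange (e : E) : f e ∈ LinearMap.range α := (h _).1 (LinearMap.congr_fun hf e)
  obtain ⟨s, hs⟩ := projective_lifting_property α.rangeRestrict
    (f.codRestrict (LinearMap.range α) hrange) α.surjective_rangeRestrict
  exact ⟨s, LinearMap.ext fun e => congrArg Subtype.val (LinearMap.congr_fun hs e)⟩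

variable {N : Type} [AddCommGroup N] [Module R N]

lemma exists_comp_eq_smul_id [Projective R E] {α : E' →ₗ[R] E} {ε : E →ₗ[R] N} (h : Exact α ε)
    {a : R} (ha : a ∈ annihilator R N) : ∃ s : E →ₗ[R] E', α ∘ₗ s = a • LinearMap.id :=
  exists_comp_eq_of_exact h (LinearMap.ext fun _ => by simp [mem_annihilator.1 ha])

variable {F : ℕ → Type} [∀ q, AddCommGroup (F q)] [∀ q, Module R (F q)] [∀ q, Projective R (F q)]
  {dF : ∀ q : ℕ, F (q + 1) →ₗ[R] F q} {ε : F 0 →ₗ[R] N}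

lemma exists_homotopy_smul_id (hexact : ∀ q : ℕ, Exact (dF (q + 1)) (dF q))
    (hexact0 : Exact (dF 0) ε) {a : R} (ha : a ∈ annihilator R N) (q : ℕ) :
    ∃ (s : F q →ₗ[R] F (q + 1)) (t : F (q + 1) →ₗ[R] F (q + 2)),
      dF (q + 1) ∘ₗ t + s ∘ₗ dF q = a • LinearMap.id := by
  induction q with
  | zero =>
    obtain ⟨s, hs⟩ := exists_comp_eq_smul_id hexact0 ha
    obtain ⟨t, ht⟩ := exists_comp_eq_of_exact (hexact 0) (f := a • LinearMap.id - s ∘ₗ dF 0) (by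
      rw [LinearMap.comp_sub, ← LinearMap.comp_assoc, hs, LinearMap.comp_smul, LinearMap.smul_comp,
        LinearMap.comp_id, LinearMap.id_comp, sub_self])
    exact ⟨s, t, by rw [ht, sub_add_cancel]⟩
  | succ q ih =>
    obtain ⟨s, t, hst⟩ := ih
    obtain ⟨t', ht'⟩ := exists_comp_eq_of_exact (hexact (q + 1))
      (f := a • LinearMap.id - t ∘ₗ dF (q + 1)) (by
        rw [LinearMap.comp_sub, ← LinearMap.comp_assoc, eq_sub_of_add_eq hst, LinearMap.sub_comp,
          LinearMap.comp_assoc, (hexact q).linearMap_comp_eq_zero, LinearMap.comp_zero, sub_zero,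
          LinearMap.comp_smul, LinearMap.smul_comp, LinearMap.comp_id, LinearMap.id_comp, sub_self])
    exact ⟨t, t', by rw [ht', sub_add_cancel]⟩

end Homotopy

variable {A : Type} [CommRing A] [Algebra R A] {M : Type} [AddCommGroup M] [Module R M] [Module A M]
  [IsScalarTower R A M]

lemma lTensor_smul_id_apply {E : Type} [AddCommGroup E] [Module R E] (a : R) (t : M ⊗[R] E) :
    lTensor A M (a • LinearMap.id) t = algebraMap R A a • t := by
  rw [map_smul, lTensor_id, LinearMap.smul_apply, LinearMap.id_apply, algebraMap_smul]

namespace torMod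

variable {N : Type} [AddCommGroup N] [Module R N]
variable {F : ℕ → Type} [∀ q, AddCommGroup (F q)] [∀ q, Module R (F q)]
  {dF : ∀ q : ℕ, F (q + 1) →ₗ[R] F q} {ε : F 0 →ₗ[R] N}

variable (A M dF) in
/-- The homology class of a cycle of `M ⊗ F`. -/
def mk (q : ℕ) : LinearMap.ker (torDout R A M F dF q) →ₗ[A] torMod R A M F dF q :=
  Submodule.mkQ _

lemma mk_surjective (q : ℕ) : Surjective (mk A M dF q) := Submodule.mkQ_surjective _

lemma mk_eq_zero_iff {q : ℕ} (z : LinearMap.ker (torDout R A M F dF q)) :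
    mk A M dF q z = 0 ↔ ∃ b, lTensor A M (dF q) b = z.1 :=
  Submodule.Quotient.mk_eq_zero _

lemma isOneAddTorsion {I : Ideal R} (h : IsOneAddTorsion I A M) (q : ℕ) :
    IsOneAddTorsion I A (torMod R A M F dF q) :=
  ((h.tensorProduct (F q)).of_injective (Submodule.subtype _) Subtype.val_injective).of_surjective
    (mk A M dF q) (mk_surjective q)

lemma annihilator_le (q : ℕ) : annihilator A M ≤ annihilator A (torMod R A M F dF q) :=
  (annihilator_le_annihilator_tensorProduct.trans
    ((LinearMap.ker (torDout R A M F dF q)).subtype.annihilator_le_of_injective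
      Subtype.val_injective)).trans
    ((mk A M dF q).annihilator_le_of_surjective (mk_surjective q))

lemma finite [IsNoetherianRing A] [Module.Finite A M] [∀ q, Module.Finite R (F q)] (q : ℕ) :
    Module.Finite A (torMod R A M F dF q) :=
  have : Module.Finite A (M ⊗[R] F q) := finite_tensorProduct
  .of_surjective (mk A M dF q) (mk_surjective q)

lemma map_annihilator_le [∀ q, Projective R (F q)] (hexact : ∀ q : ℕ, Exact (dF (q + 1)) (dF q))
    (hexact0 : Exact (dF 0) ε) (q : ℕ) :
    (annihilator R N).map (algebraMap R A) ≤ annihilator A (torMod R A M F dF q) := by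
  refine Ideal.map_le_iff_le_comap.2 fun a ha => mem_annihilator.2 ?_
  refine (mk_surjective q).forall.2 fun ⟨z, hz⟩ => ?_
  rw [← map_smul, mk_eq_zero_iff, Submodule.coe_smul, ← lTensor_smul_id_apply]
  cases q with
  | zero =>
    obtain ⟨s, hs⟩ := exists_comp_eq_smul_id hexact0 ha
    exact ⟨lTensor A M s z, by rw [← hs, lTensor_comp, LinearMap.comp_apply]⟩
  | succ q =>
    obtain ⟨s, t, hst⟩ := exists_homotopy_smul_id hexact hexact0 ha q
    have hz' : lTensor A M (dF q) z = 0 := hz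
    refine ⟨lTensor A M t z, ?_⟩
    rw [← hst, map_add, lTensor_comp, lTensor_comp, LinearMap.add_apply,
      LinearMap.comp_apply, LinearMap.comp_apply, hz', map_zero, add_zero]

end torMod

lemma IsOneAddTorsion.subsingleton_torModS {N : Type} [AddCommGroup N] [Module R N]
    {F : ℕ → Type} [∀ q, AddCommGroup (F q)] [∀ q, Module R (F q)] [∀ q, Projective R (F q)]
    {dF : ∀ q : ℕ, F (q + 1) →ₗ[R] F q} {ε : F 0 →ₗ[R] N} {L : Type} [AddCommGroup L] [Module A L]
    (h : IsOneAddTorsion (annihilator R N) A L) (hexact : ∀ q : ℕ, Exact (dF (q + 1)) (dF q))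
    (hexact0 : Exact (dF 0) ε) (q : ℕ) : Subsingleton (torModS R A L F dF q) := by
  let : Module R L := Module.compHom L (algebraMap R A)
  have : IsScalarTower R A L := ⟨fun r s m => by
    rw [Algebra.smul_def, mul_smul]
    rfl⟩
  exact (torMod.isOneAddTorsion h q).subsingleton (torMod.map_annihilator_le hexact hexact0 q)

end Resolutions

noncomputable section Comparison

open Function Module
open TensorProduct.AlgebraTensorModule (lTensor)
open scoped TensorProduct

variable {R : Type} [CommRing R] {A : Type} [CommRing A] [Algebra R A] {n : ℕ} {x : Fin n → A}

/-- `lcMod A x L i` as a module over the base ring `R` of `A`. -/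
abbrev lcMod.baseModule (R : Type) [CommRing R] {A : Type} [CommRing A] [Algebra R A] {n : ℕ}
    (x : Fin n → A) (L : Type) [AddCommGroup L] [Module A L] (i : ℕ) : Module R (lcMod A x L i) :=
  Module.compHom _ (algebraMap R A)

attribute [local instance] lcMod.baseModule

variable {M : Type} [AddCommGroup M] [Module R M] [Module A M] [IsScalarTower R A M]
variable {E E' : Type} [AddCommGroup E] [Module R E] [AddCommGroup E'] [Module R E']

section Tensor

lemma tmulRightS_add (e e' : E) :
    tmulRightS R A M E (e + e') = tmulRightS R A M E e + tmulRightS R A M E e' :=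
  LinearMap.ext fun m => TensorProduct.tmul_add m e e'

lemma tmulRightS_smul (r : R) (e : E) :
    tmulRightS R A M E (r • e) = algebraMap R A r • tmulRightS R A M E e :=
  LinearMap.ext fun m =>
    (TensorProduct.tmul_smul r m e).trans (algebraMap_smul A r (m ⊗ₜ[R] e)).symm

lemma cechTmul_eq_map_tmulRightS (T : Finset (Fin n)) (c : cechL A x M T) (e : E) :
    cechTmul R A M E x T c e = cechL.map x (tmulRightS R A M E e) T c :=
  LinearMap.congr_fun (IsLocalizedModule.linearMap_ext (Submonoid.powers (∏ i ∈ T, x i))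
    (LocalizedModule.mkLinearMap _ M) (LocalizedModule.mkLinearMap _ _)
    ((LocalizedModule.lift_comp _ _ _).trans (IsLocalizedModule.map_comp _ _ _ _).symm)) c

variable (A M) in
/-- The `A`-linear map `M ⊗ E → M` given by `m ⊗ e ↦ c e • m`. -/
def tensorEval (c : E →ₗ[R] R) : M ⊗[R] E →ₗ[A] M :=
  (TensorProduct.AlgebraTensorModule.rid R A M).toLinearMap ∘ₗ lTensor A M c

lemma tensorEval_tmul (c : E →ₗ[R] R) (m : M) (e : E) :
    tensorEval A M c (m ⊗ₜ e) = c e • m := by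
  simp [tensorEval]

lemma tensorEval_comp_tmulRightS (c : E →ₗ[R] R) (e : E) :
    tensorEval A M c ∘ₗ tmulRightS R A M E e = algebraMap R A (c e) • LinearMap.id :=
  LinearMap.ext fun m => (tensorEval_tmul c m e).trans (algebraMap_smul A (c e) m).symm

lemma sum_tmulRightS_comp_tensorEval {ι : Type*} [Fintype ι] (b : Basis ι R E) :
    ∑ k, tmulRightS R A M E (b k) ∘ₗ tensorEval A M (b.coord k) = LinearMap.id := by
  refine TensorProduct.AlgebraTensorModule.ext fun m e => ?_
  have hterm (k) : (tmulRightS R A M E (b k) ∘ₗ tensorEval A M (b.coord k)) (m ⊗ₜ e) =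
      m ⊗ₜ (b.repr e k • b k) :=
    (congrArg (· ⊗ₜ b k) (tensorEval_tmul _ m e)).trans (TensorProduct.smul_tmul _ _ _)
  rw [LinearMap.sum_apply, Finset.sum_congr rfl fun k _ => hterm k, ← TensorProduct.tmul_sum,
    b.sum_repr, LinearMap.id_apply]

end Tensor

namespace lcMod

variable (x M E) in
/-- The natural map `H^i(M) ⊗ E → H^i(M ⊗ E)`. -/
def comparison (i : ℕ) : lcMod A x M i ⊗[R] E →ₗ[R] lcMod A x (M ⊗[R] E) i :=
  TensorProduct.lift <| LinearMap.mk₂ R (fun h e => map x (tmulRightS R A M E e) i h)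
    (fun h h' e => map_add _ h h')
    (fun r h e => map_smul (map x (tmulRightS R A M E e) i) (algebraMap R A r) h)
    (fun h e e' => by rw [tmulRightS_add, lcMod.map_add, LinearMap.add_apply])
    (fun r h e => by
      rw [tmulRightS_smul, lcMod.map_smul]
      rfl)

@[simp] lemma comparison_tmul {i : ℕ} (h : lcMod A x M i) (e : E) :
    comparison x M E i (h ⊗ₜ[R] e) = map x (tmulRightS R A M E e) i h := rfl

lemma map_lTensor_comparison (φ : E →ₗ[R] E') {i : ℕ} (t : lcMod A x M i ⊗[R] E) :
    map x (lTensor A M φ) i (comparison x M E i t) =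
      comparison x M E' i (LinearMap.lTensor _ φ t) := by
  induction t with
  | zero => simp only [map_zero]
  | tmul h e =>
    rw [LinearMap.lTensor_tmul, comparison_tmul, comparison_tmul, ← map_comp_apply]
    rfl
  | add s t hs ht => simp only [map_add, hs, ht]

lemma comparison_bijective_of_free [Module.Free R E] [Module.Finite R E] (i : ℕ) :
    Bijective (comparison (R := R) x M E i) := by
  let b := Module.Free.chooseBasis R E
  let coord (k) : lcMod A x (M ⊗[R] E) i →ₗ[R] lcMod A x M i :=
    { (map x (tensorEval A M (b.coord k)) i).toAddMonoidHom with
      map_smul' := fun r y => map_smul (map x (tensorEval A M (b.coord k)) i) (algebraMap R A r) y }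
  let ψ : lcMod A x (M ⊗[R] E) i →ₗ[R] lcMod A x M i ⊗[R] E :=
    ∑ k, (TensorProduct.mk R (lcMod A x M i) E).flip (b k) ∘ₗ coord k
  have hψ (y) : ψ y = ∑ k, map x (tensorEval A M (b.coord k)) i y ⊗ₜ[R] b k :=
    LinearMap.sum_apply _ _ _
  refine bijective_iff_has_inverse.2 ⟨ψ, LinearMap.congr_fun (f := ψ ∘ₗ comparison x M E i)
    (g := LinearMap.id) (TensorProduct.ext' fun h e => ?_), fun y => ?_⟩
  · have hterm (k) : map x (tensorEval A M (b.coord k)) i (map x (tmulRightS R A M E e) i h) ⊗ₜ[R]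
        b k = h ⊗ₜ[R] (b.repr e k • b k) := by
      rw [← map_comp_apply, tensorEval_comp_tmulRightS, map_smul_id_apply,
        ← TensorProduct.smul_tmul]
      rfl
    rw [LinearMap.comp_apply, comparison_tmul, hψ, Finset.sum_congr rfl fun k _ => hterm k,
      ← TensorProduct.tmul_sum, b.sum_repr, LinearMap.id_apply]
  · rw [hψ, map_sum]
    simp only [comparison_tmul, ← map_comp_apply]
    rw [← LinearMap.sum_apply, ← lcMod.map_sum, sum_tmulRightS_comp_tensorEval, map_id_apply]

variable {N : Type} [AddCommGroup N] [Module R N] [Module.Free R E] [Module.Finite R E]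
  [Module.Free R E'] [Module.Finite R E'] {δ : E' →ₗ[R] E} {ε : E →ₗ[R] N} {i : ℕ}

theorem comparison_bijective (hexact : Exact δ ε) (hε : Surjective ε)
    (hkerδ : IsOneAddTorsion (annihilator R N) A
      (lcMod A x (LinearMap.ker (lTensor A M δ)) (i + 1)))
    (hkerε : IsOneAddTorsion (annihilator R N) A
      (lcMod A x (LinearMap.ker (lTensor A M ε)) (i + 1))) :
    Bijective (comparison (R := R) x M N i) := by
  have hδε : Exact (map x (lTensor A M δ) i) (map x (lTensor A M ε) i) := by
    refine exact_map_map_of_isOneAddTorsion (lTensor_exact M hexact hε)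
      (LinearMap.lTensor_surjective M hε) (fun a ha => ?_) hkerδ
    obtain ⟨s, hs⟩ := exists_comp_eq_smul_id hexact ha
    exact ⟨lTensor A M s, LinearMap.ext fun t => by
      rw [← TensorProduct.AlgebraTensorModule.lTensor_comp, hs, lTensor_smul_id_apply]
      rfl⟩
  have hεi : Surjective (map x (lTensor A M ε) i) := map_surjective
    (LinearMap.lTensor_surjective M hε) map_annihilator_le_annihilator_tensorProduct hkerε
  refine ⟨(injective_iff_map_eq_zero _).2 fun t ht => ?_, fun y => ?_⟩
  · obtain ⟨t, rfl⟩ := LinearMap.lTensor_surjective _ hε t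
    rw [← map_lTensor_comparison] at ht
    obtain ⟨y, hy⟩ := (hδε _).1 ht
    obtain ⟨u, rfl⟩ := (comparison_bijective_of_free (x := x) (M := M) (E := E') i).2 y
    rw [map_lTensor_comparison] at hy
    rw [← (comparison_bijective_of_free i).1 hy]
    exact (lTensor_exact _ hexact hε _).2 ⟨u, rfl⟩
  · obtain ⟨z, rfl⟩ := hεi y
    obtain ⟨t, rfl⟩ := (comparison_bijective_of_free (x := x) (M := M) (E := E) i).2 z
    exact ⟨_, (map_lTensor_comparison ε t).symm⟩

end lcMod

end Comparison

noncomputable section PolynomialRing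

open Function MvPolynomial

lemma algebraMap_quotient_span_range_X_surjective (σ R : Type*) [CommRing R] :
    Surjective (algebraMap R (MvPolynomial σ R ⧸
      Ideal.span (Set.range (X : σ → MvPolynomial σ R)))) := by
  refine Ideal.Quotient.mk_surjective.forall.2 fun p => ⟨constantCoeff p, ?_⟩
  induction p using MvPolynomial.induction_on with
  | C r => rw [constantCoeff_C]; rfl
  | add p q hp hq => rw [map_add, map_add, map_add, hp, hq]
  | mul_X p j _ =>
    have hX : Ideal.Quotient.mk (Ideal.span (Set.range (X : σ → MvPolynomial σ R))) (X j) = 0 :=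
      Ideal.Quotient.eq_zero_iff_mem.2 (Ideal.subset_span (Set.mem_range_self j))
    rw [map_mul, constantCoeff_X, mul_zero, map_zero, map_mul, hX, mul_zero]

end PolynomialRing

noncomputable section DecompositionGrading

open DirectSum

variable {R : Type} [CommRing R] {A : Type} [CommRing A] [Algebra R A]
  {M : Type} [AddCommGroup M] [Module A M]
  (𝒜 : ℤ → Submodule R A) (ℳ : ℤ → AddSubgroup M) [Decomposition ℳ] [SetLike.GradedSMul 𝒜 ℳ]

lemma coe_decompose_smul {e : ℤ} {a : A} (ha : a ∈ 𝒜 e) {μ ν : ℤ} (hν : μ + e = ν) (m : M) :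
    (decompose ℳ (a • m) ν : M) = a • (decompose ℳ m μ : M) := by
  subst hν
  induction m using Decomposition.inductionOn ℳ with
  | zero => simp
  | @homogeneous i m =>
    have ham : a • (m : M) ∈ ℳ (e + i) := SetLike.GradedSMul.smul_mem ha m.2
    obtain rfl | h := eq_or_ne i μ
    · rw [decompose_of_mem_same ℳ (add_comm e i ▸ ham), decompose_of_mem_same ℳ m.2]
    · rw [decompose_of_mem_ne ℳ ham (by omega), decompose_of_mem_ne ℳ m.2 h, smul_zero]
  | add m m' h h' =>
    simp only [smul_add, decompose_add, DirectSum.add_apply, AddMemClass.coe_add, h, h']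

/-- The weight grading given by a decomposition of `M` that is compatible with a grading of `A`
in which `x j` has degree `w j`. -/
def WeightGrading.ofDecomposition [SetLike.GradedOne 𝒜] {n : ℕ} {x : Fin n → A} {w : Fin n → ℤ}
    (hx : ∀ j, x j ∈ 𝒜 (w j)) : WeightGrading R x w M where
  proj μ := AddMonoidHom.mk' (fun m => (decompose ℳ m μ : M)) fun m m' => by
    rw [decompose_add, DirectSum.add_apply, AddMemClass.coe_add]
  proj_algebraMap_smul μ r m :=
    coe_decompose_smul 𝒜 ℳ (SetLike.algebraMap_mem_graded 𝒜 r) (add_zero μ) m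
  proj_proj μ ν m := by
    split_ifs with h
    · exact h ▸ decompose_of_mem_same ℳ (decompose ℳ m μ).2
    · exact decompose_of_mem_ne ℳ (decompose ℳ m ν).2 (Ne.symm h)
  proj_smul μ j m := coe_decompose_smul 𝒜 ℳ (hx j) rfl m
  exists_sum_proj m := by
    classical
    refine ⟨(decompose ℳ m).support, fun E hE => ?_⟩
    conv_rhs => rw [← sum_support_decompose ℳ m]
    refine (Finset.sum_subset hE fun μ _ hμ => ?_).symm
    exact ZeroMemClass.coe_eq_zero.2 (DFinsupp.notMem_support_iff.1 hμ)

end DecompositionGrading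

noncomputable section BaseChange

open Function Module
open TensorProduct.AlgebraTensorModule (lTensor)
open scoped TensorProduct

variable {R : Type} [CommRing R] [IsNoetherianRing R] {A : Type} [CommRing A] [IsNoetherianRing A]
  [Algebra R A] {n : ℕ} {x : Fin n → A} {w : Fin n → ℤ}
variable {M : Type} [AddCommGroup M] [Module R M] [Module A M] [IsScalarTower R A M]
  [Module.Finite A M]
variable {N : Type} [AddCommGroup N] [Module R N] [Module.Finite R N]

theorem lcMod.isOneAddTorsion_of_tensorProduct
    (hA : Surjective (algebraMap R (A ⧸ Ideal.span (Set.range x)))) (hw : ∀ j, 0 < w j) {d : ℕ}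
    (hd : ∀ j, d < j → Subsingleton (lcMod A x (M ⊗[R] N) j)) {j : ℕ} (hj : d < j)
    {L : Type} [AddCommGroup L] [Module A L] [Module.Finite A L]
    (hL : annihilator A M ≤ annihilator A L) (g : WeightGrading R x w L) :
    IsOneAddTorsion (annihilator R N) A (lcMod A x L j) :=
  WeightGrading.isOneAddTorsion_lc hA hw
    (fun _ hi L _ _ _ => lcMod.subsingleton_of_tensorProduct hd hi L) hj L hL g

lemma lcMod.isOneAddTorsion_ker_lTensor
    (hA : Surjective (algebraMap R (A ⧸ Ideal.span (Set.range x)))) (hw : ∀ j, 0 < w j) {d : ℕ}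
    (hd : ∀ j, d < j → Subsingleton (lcMod A x (M ⊗[R] N) j)) {j : ℕ} (hj : d < j)
    (g : WeightGrading R x w M) {E E' : Type} [AddCommGroup E] [Module R E] [Module.Finite R E]
    [AddCommGroup E'] [Module R E'] (φ : E →ₗ[R] E') :
    IsOneAddTorsion (annihilator R N) A (lcMod A x (LinearMap.ker (lTensor A M φ)) j) :=
  have : Module.Finite A (M ⊗[R] E) := finite_tensorProduct
  isOneAddTorsion_of_tensorProduct hA hw hd hj
    (annihilator_le_annihilator_tensorProduct.trans
      ((LinearMap.ker _).subtype.annihilator_le_of_injective Subtype.val_injective))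
    (.restrict _ _ (g.isHomogeneous_lTensor φ).mem_ker)

attribute [local instance] lcMod.baseModule

theorem top_localCohomology_base_change_general
    (hA : Surjective (algebraMap R (A ⧸ Ideal.span (Set.range x)))) (hw : ∀ j, 0 < w j)
    (g : WeightGrading R x w M) {F : ℕ → Type} [∀ q, AddCommGroup (F q)] [∀ q, Module R (F q)]
    [∀ q, Module.Free R (F q)] [∀ q, Module.Finite R (F q)]
    {dF : ∀ q : ℕ, F (q + 1) →ₗ[R] F q} {ε : F 0 →ₗ[R] N}
    (hexact : ∀ q : ℕ, Exact (dF (q + 1)) (dF q)) (hexact0 : Exact (dF 0) ε)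
    (hsurj : Surjective ε) {d : ℕ}
    (hd : ∀ i, d < i → Subsingleton (lcMod A x (M ⊗[R] N) i)) :
    (∀ i, d ≤ i → Bijective (lcMod.comparison (R := R) x M N i)) ∧
    (∀ i, d < i → ∀ q, Subsingleton (torModS R A (lcMod A x M i) F dF q) ∧
      lcVanish A x (torMod R A M F dF q) i) := by
  refine ⟨fun i hi => ?_, fun i hi q => ⟨?_, ?_⟩⟩
  · have hi' := Nat.lt_succ_of_le hi
    exact lcMod.comparison_bijective hexact0 hsurj
      (lcMod.isOneAddTorsion_ker_lTensor hA hw hd hi' g (dF 0))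
      (lcMod.isOneAddTorsion_ker_lTensor hA hw hd hi' g ε)
  · exact (lcMod.isOneAddTorsion_of_tensorProduct hA hw hd hi le_rfl g).subsingleton_torModS
      hexact hexact0 q
  · have := torMod.finite (A := A) (M := M) (dF := dF) q
    exact (lcVanish_iff _ i).2 (lcMod.subsingleton_of_tensorProduct hd hi _
      (torMod.annihilator_le q) (torMod.map_annihilator_le hexact hexact0 q))

end BaseChange

open MvPolynomial in
/-- **Comparison of cohomology under base change (Lemma CompCoh).**
Let `R` be Noetherian, `S := R[X_1, …, X_n]` graded with `deg X_i = w i > 0`, `N` a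
finitely generated `R`-module and `M` a finitely generated graded `S`-module.  Let
`d := max { i | H^i_{S₊}(M ⊗_R N) ≠ 0 }`.  Then the natural map
`H^d_{S₊}(M) ⊗_R N → H^d_{S₊}(M ⊗_R N)` (characterized on cocycles by
`z ⊗ ν ↦ class of (T ↦ z_T ⊗ ν)`) is an isomorphism, and for every `i > d` and every
`q`, `Tor_q^R(H^i_{S₊}(M), N) = 0` and `H^i_{S₊}(Tor_q^R(M, N)) = 0`
(`Tor` computed from any resolution of `N` by finite free `R`-modules, and local
cohomology by the Čech complex on the variables). -/
theorem top_localCohomology_base_change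
    (R : Type) [CommRing R] [IsNoetherianRing R]
    {n : ℕ} (w : Fin n → ℤ) (hw : ∀ i, 0 < w i)
    (M : Type) [AddCommGroup M]
    [Module (MvPolynomial (Fin n) R) M] [Module R M]
    [IsScalarTower R (MvPolynomial (Fin n) R) M]
    [Module.Finite (MvPolynomial (Fin n) R) M]
    (ℳ : ℤ → AddSubgroup M) [DirectSum.Decomposition ℳ]
    [SetLike.GradedSMul (weightedHomogeneousSubmodule R w) ℳ]
    (N : Type) [AddCommGroup N] [Module R N] [Module.Finite R N]
    (F : ℕ → Type) [∀ q, AddCommGroup (F q)] [∀ q, Module R (F q)]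
    [∀ q, Module.Free R (F q)] [∀ q, Module.Finite R (F q)]
    (dF : ∀ q : ℕ, F (q + 1) →ₗ[R] F q) (ε : F 0 →ₗ[R] N)
    (hexact : ∀ q : ℕ, Function.Exact (dF (q + 1)) (dF q))
    (hexact0 : Function.Exact (dF 0) ε) (hsurj : Function.Surjective ε)
    (d : ℕ)
    (hd : Nontrivial (lcMod (MvPolynomial (Fin n) R)
        (fun j : Fin n => (X j : MvPolynomial (Fin n) R)) (TensorProduct R M N) d) ∧
      ∀ i : ℕ, d < i → Subsingleton (lcMod (MvPolynomial (Fin n) R)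
        (fun j : Fin n => (X j : MvPolynomial (Fin n) R)) (TensorProduct R M N) i)) :
    (∃ g : TensorProduct R
        (RestrictScalars R (MvPolynomial (Fin n) R)
          (lcMod (MvPolynomial (Fin n) R) (fun j : Fin n => (X j : MvPolynomial (Fin n) R)) M d))
        N →ₗ[R]
      RestrictScalars R (MvPolynomial (Fin n) R)
        (lcMod (MvPolynomial (Fin n) R) (fun j : Fin n => (X j : MvPolynomial (Fin n) R))
          (TensorProduct R M N) d),
      (∀ (z : ↥(LinearMap.ker (cechD (MvPolynomial (Fin n) R)
            (fun j : Fin n => (X j : MvPolynomial (Fin n) R)) M d))) (c : N),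
        ∃ zz : ↥(LinearMap.ker (cechD (MvPolynomial (Fin n) R)
            (fun j : Fin n => (X j : MvPolynomial (Fin n) R)) (TensorProduct R M N) d)),
          (∀ T, (zz : cechC (MvPolynomial (Fin n) R)
              (fun j : Fin n => (X j : MvPolynomial (Fin n) R)) (TensorProduct R M N) d) T =
            cechTmul R (MvPolynomial (Fin n) R) M N
              (fun j : Fin n => (X j : MvPolynomial (Fin n) R)) T.1
              ((z : cechC (MvPolynomial (Fin n) R)
                (fun j : Fin n => (X j : MvPolynomial (Fin n) R)) M d) T) c) ∧
          g ((Submodule.Quotient.mk z :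
              lcMod (MvPolynomial (Fin n) R)
                (fun j : Fin n => (X j : MvPolynomial (Fin n) R)) M d) ⊗ₜ[R] c) =
            (Submodule.Quotient.mk zz :
              lcMod (MvPolynomial (Fin n) R)
                (fun j : Fin n => (X j : MvPolynomial (Fin n) R)) (TensorProduct R M N) d)) ∧
      Function.Bijective g) ∧
    (∀ i : ℕ, d < i → ∀ q : ℕ,
      Subsingleton (torModS R (MvPolynomial (Fin n) R)
        (lcMod (MvPolynomial (Fin n) R)
          (fun j : Fin n => (X j : MvPolynomial (Fin n) R)) M i) F dF q) ∧
      lcVanish (MvPolynomial (Fin n) R) (fun j : Fin n => (X j : MvPolynomial (Fin n) R))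
        (torMod R (MvPolynomial (Fin n) R) M F dF q) i) := by
  have := WeightedHomogeneousSubmodule.gradedMonoid (R := R) (w := w)
  let g : WeightGrading R (X : Fin n → MvPolynomial (Fin n) R) w M :=
    .ofDecomposition (weightedHomogeneousSubmodule R w) ℳ (isWeightedHomogeneous_X R w)
  obtain ⟨hcomparison, hvanish⟩ := top_localCohomology_base_change_general
    (algebraMap_quotient_span_range_X_surjective (Fin n) R) hw g hexact hexact0 hsurj hd.2
  refine ⟨⟨lcMod.comparison X M N d, fun z c => ?_, hcomparison d le_rfl⟩, hvanish⟩
  exact ⟨cechC.mapCocycles X (tmulRightS R _ M N c) d z,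
    fun T => (cechTmul_eq_map_tmulRightS T.1 (z.1 T) c).symm, rfl⟩
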